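/- arXiv:2009.00554 — 15 statements merged into one kernel-verified Lean document; each statement's English description precedes it below -/
import Mathlib

section
/- Let d ≥ 0, n = 3^d, and let D_n = ⟨a, b | a^n = b^2 = (ab)^2 = 1⟩ be the dihedral group of order 2n. Let G = Cay(D_n, C) with C = {a^{3^i} b | 0 ≤ i ≤ d}. For a positive integer i, let [i]_3 ∈ {1,2} denote the rightmost nonzero digit of the base-3 representation of i. Then the set M = {a^i | 1 ≤ i < n, [i]_3 = 1} ∪ {a^i b | 1 ≤ i < n, [i]_3 = 2} ∪ {1, b} has exactly n + 1 elements, and every element of M has exactly one neighbor in M in the graph G (so M induces a perfect matching on n+1 vertices). -/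
/-- The rightmost nonzero digit of the base-3 representation of `i`
(junk value for `i = 0`). -/
def rightmostBase3 (i : ℕ) : ℕ := (i / 3 ^ (padicValNat 3 i)) % 3

lemma rb3_mul (v u : ℕ) (hu : u % 3 ≠ 0) : rightmostBase3 (3 ^ v * u) = u % 3 := by
  have h3 : Fact (Nat.Prime 3) := ⟨Nat.prime_three⟩
  have hu0 : u ≠ 0 := by rintro rfl; simp at hu
  have hnd : ¬ 3 ∣ u := fun h => hu (Nat.mod_eq_zero_of_dvd h)
  have hv : padicValNat 3 (3 ^ v * u) = v := by
    rw [padicValNat.mul (by positivity) hu0, padicValNat.prime_pow,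
      padicValNat.eq_zero_of_not_dvd hnd, add_zero]
  unfold rightmostBase3
  rw [hv, Nat.mul_div_cancel_left _ (by positivity)]

lemma exists_form (i : ℕ) (hi : i ≠ 0) : ∃ v u : ℕ, u % 3 ≠ 0 ∧ i = 3 ^ v * u := by
  obtain ⟨v, u, hu, h⟩ := Nat.exists_eq_pow_mul_and_not_dvd hi 3 (by norm_num)
  exact ⟨v, u, fun h0 => hu (Nat.dvd_of_mod_eq_zero h0), h⟩

/-- The set of exponents `3 ^ v * (1 + 3 * t)`, `v ≤ d`, modulo `3^d`. -/
def PP (d n : ℕ) (x : ZMod n) : Prop :=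
  ∃ v : ℕ, v ≤ d ∧ ∃ t : ℤ, x = ((3 ^ v * (1 + 3 * t) : ℤ) : ZMod n)

lemma key_int (d v w k : ℕ) (t s u : ℤ) (hv : v ≤ d) (hw : w ≤ d) (hk : k ≤ d)
    (h : (3 : ℤ) ^ d ∣ 3 ^ v * (1 + 3 * t) + 3 ^ w * (1 + 3 * s) + 3 ^ k * (1 + 3 * u)) :
    v = w ∧ v = k := by
  obtain ⟨m, hm1, hm2, hm3, hm⟩ : ∃ m, m ≤ v ∧ m ≤ w ∧ m ≤ k ∧ (m = v ∨ m = w ∨ m = k) :=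
    ⟨min v (min w k), by omega, by omega, by omega, by omega⟩
  obtain ⟨v, rfl⟩ := Nat.exists_eq_add_of_le hm1
  obtain ⟨w, rfl⟩ := Nat.exists_eq_add_of_le hm2
  obtain ⟨k, rfl⟩ := Nat.exists_eq_add_of_le hm3
  obtain ⟨d, rfl⟩ := Nat.exists_eq_add_of_le (le_trans hm1 hv)
  have h' : (3 : ℤ) ^ d ∣ 3 ^ v * (1 + 3 * t) + 3 ^ w * (1 + 3 * s) + 3 ^ k * (1 + 3 * u) := by
    apply Int.dvd_of_mul_dvd_mul_left (a := 3 ^ m) (by positivity)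
    convert h using 1 <;> ring
  clear h
  by_contra hne
  have hd : d ≠ 0 := by omega
  have h3 := (dvd_pow_self (3 : ℤ) hd).trans h'
  have e : ∀ (q : ℕ) (z : ℤ), ∃ c : ℤ, (q = 0 ∧ 3 ^ q * (1 + 3 * z) = 1 + 3 * c) ∨
      (q ≠ 0 ∧ 3 ^ q * (1 + 3 * z) = 3 * c) := by
    intro q z
    rcases q with _ | q
    · exact ⟨z, Or.inl ⟨rfl, by simp⟩⟩
    · exact ⟨3 ^ q * (1 + 3 * z), Or.inr ⟨by omega, by ring⟩⟩
  obtain ⟨c1, h1⟩ := e v t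
  obtain ⟨c2, h2⟩ := e w s
  obtain ⟨c4, h4⟩ := e k u
  omega

lemma key_zmod (d n v w k : ℕ) (hn : n = 3 ^ d) (t s : ℤ) (hv : v ≤ d) (hw : w ≤ d) (hk : k ≤ d)
    (h : ((3 ^ v * (1 + 3 * t) : ℤ) : ZMod n) + ((3 ^ w * (1 + 3 * s) : ℤ) : ZMod n)
      + 3 ^ k = 0) : v = w ∧ v = k := by
  apply key_int d v w k t s 0 hv hw hk
  have := (ZMod.intCast_zmod_eq_zero_iff_dvd
    (3 ^ v * (1 + 3 * t) + 3 ^ w * (1 + 3 * s) + 3 ^ k * (1 + 3 * 0)) n).1 (by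
      push_cast at h ⊢; simpa using h)
  rw [hn] at this
  exact_mod_cast this

lemma pow_d_zero (d n : ℕ) (hn : n = 3 ^ d) : (3 : ZMod n) ^ d = 0 := by
  have := ZMod.natCast_self n
  rw [hn] at this ⊢
  exact_mod_cast this

lemma PP_total (d n : ℕ) (hn : n = 3 ^ d) (x : ZMod n) : PP d n x ∨ PP d n (-x) := by
  have : NeZero n := ⟨by rw [hn]; positivity⟩
  have hz := pow_d_zero d n hn
  by_cases hx : x = 0
  · left; exact ⟨d, le_rfl, 0, by simp [hx, hz]⟩
  have hi : x.val ≠ 0 := by simpa using hx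
  obtain ⟨v, u, hu, h⟩ := exists_form _ hi
  have hxv : x = ((3 ^ v * u : ℕ) : ZMod n) := by rw [← h]; simp
  have hvd : v ≤ d := by
    by_contra hlt
    apply hx
    rw [hxv]; push_cast
    rw [← Nat.add_sub_of_le (Nat.le_of_not_le hlt), pow_add, hz]; simp
  have : u % 3 = 1 ∨ u % 3 = 2 := by omega
  rcases this with h1 | h1
  · left
    obtain ⟨q, rfl⟩ : ∃ q, u = 1 + 3 * q := ⟨u / 3, by omega⟩
    exact ⟨v, hvd, q, by rw [hxv]; push_cast; ring⟩
  · right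
    obtain ⟨q, rfl⟩ : ∃ q, u = 2 + 3 * q := ⟨u / 3, by omega⟩
    exact ⟨v, hvd, -1 - q, by rw [hxv]; push_cast; ring⟩

lemma PP_zero (d n : ℕ) (hn : n = 3 ^ d) : PP d n 0 :=
  ⟨d, le_rfl, 0, by simp [pow_d_zero d n hn]⟩

lemma PP_anti (d n : ℕ) (hn : n = 3 ^ d) (x : ZMod n) (h : PP d n x) (h' : PP d n (-x)) :
    x = 0 := by
  have hz := pow_d_zero d n hn
  obtain ⟨v, hv, t, ht⟩ := h
  obtain ⟨w, hw, s, hs⟩ := h'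
  have := key_zmod d n v w d hn t s hv hw le_rfl (by rw [← ht, ← hs, hz]; ring)
  rw [ht, this.2]; push_cast; rw [hz]; simp

lemma PP_unique (d n : ℕ) (hn : n = 3 ^ d) (x : ZMod n) (h : PP d n x) :
    ∃! y, PP d n y ∧ ∃ k ≤ d, x + y + 3 ^ k = 0 := by
  obtain ⟨v, hv, t, ht⟩ := h
  refine ⟨-3 ^ v - x, ⟨⟨v, hv, -1 - t, ?_⟩, v, hv, by ring⟩, ?_⟩
  · rw [ht]; push_cast; ring
  · rintro y ⟨⟨w, hw, s, hs⟩, k, hk, hy⟩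
    have := key_zmod d n v w k hn t s hv hw hk (by rw [← ht, ← hs, hy])
    rw [this.2]
    linear_combination hy

lemma PP_nat (d n : ℕ) (hn : n = 3 ^ d) (i : ℕ) (hi : 1 ≤ i) (hin : i < n) :
    (PP d n i ↔ rightmostBase3 i = 1) ∧ (PP d n (-i) ↔ rightmostBase3 i = 2) := by
  have hi0 : (i : ZMod n) ≠ 0 := by
    intro h
    rw [ZMod.natCast_eq_zero_iff] at h
    exact absurd (Nat.le_of_dvd hi h) (by omega)
  obtain ⟨v, u, hu, h⟩ := exists_form i (by omega)
  have hvd : v ≤ d := by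
    by_contra hlt
    apply hi0
    rw [h]; push_cast
    rw [← Nat.add_sub_of_le (Nat.le_of_not_le hlt), pow_add, pow_d_zero d n hn]; simp
  have hr : rightmostBase3 i = u % 3 := by rw [h, rb3_mul v u hu]
  have h1 : u % 3 = 1 → PP d n i := by
    intro h1
    obtain ⟨q, rfl⟩ : ∃ q, u = 1 + 3 * q := ⟨u / 3, by omega⟩
    exact ⟨v, hvd, q, by rw [h]; push_cast; ring⟩
  have h2 : u % 3 = 2 → PP d n (-i) := by
    intro h1
    obtain ⟨q, rfl⟩ : ∃ q, u = 2 + 3 * q := ⟨u / 3, by omega⟩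
    exact ⟨v, hvd, -1 - q, by rw [h]; push_cast; ring⟩
  have h3 : ¬ (PP d n i ∧ PP d n (-i)) := fun hh => hi0 (PP_anti d n hn _ hh.1 hh.2)
  have h4 : u % 3 = 1 ∨ u % 3 = 2 := by omega
  rw [hr]
  rcases h4 with h4 | h4
  · have := h1 h4
    simp only [h4]; tauto
  · have := h2 h4
    simp only [h4]; tauto

/-- Theorem: for `n = 3^d`, in the Cayley graph of the dihedral group `D_n` with
connection set `C = {a^(3^i) * b | 0 ≤ i ≤ d}`, the set
`M = {a^i | [i]_3 = 1} ∪ {a^i b | [i]_3 = 2} ∪ {1, b}` has `n + 1` elements and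
every element of `M` has exactly one neighbor in `M`. -/
theorem stmt0 (d n : ℕ) (hn : n = 3 ^ d)
    (a b : DihedralGroup n) (ha : a = DihedralGroup.r 1) (hb : b = DihedralGroup.sr 0)
    (C : Set (DihedralGroup n)) (hC : C = {x | ∃ i : ℕ, i ≤ d ∧ x = a ^ (3 ^ i) * b})
    (G : SimpleGraph (DihedralGroup n))
    (hG : G = SimpleGraph.fromRel (fun x y => x⁻¹ * y ∈ C))
    (M : Set (DihedralGroup n))
    (hM : M = {x | ∃ i : ℕ, 1 ≤ i ∧ i < n ∧ rightmostBase3 i = 1 ∧ x = a ^ i}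
        ∪ {x | ∃ i : ℕ, 1 ≤ i ∧ i < n ∧ rightmostBase3 i = 2 ∧ x = a ^ i * b}
        ∪ {1, b}) :
    M.ncard = n + 1 ∧ ∀ x ∈ M, ∃! y, y ∈ M ∧ G.Adj x y := by
  have : NeZero n := ⟨by rw [hn]; positivity⟩
  have hMr : ∀ x : ZMod n, DihedralGroup.r x ∈ M ↔ PP d n x := by
    intro x
    subst hM ha hb
    simp only [DihedralGroup.one_def, DihedralGroup.r_one_pow, DihedralGroup.r_mul_sr,
      Set.mem_union, Set.mem_ofPred_eq, Set.mem_insert_iff, Set.mem_singleton_iff,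
      DihedralGroup.r.injEq, reduceCtorEq, and_false, exists_false, or_false]
    constructor
    · rintro (⟨i, h1, h2, h3, rfl⟩ | rfl)
      · exact (PP_nat d n hn i h1 h2).1.2 h3
      · exact PP_zero d n hn
    · intro h
      by_cases hx : x = 0
      · exact Or.inr hx
      · have h1 : 1 ≤ x.val := Nat.one_le_iff_ne_zero.2 (by simpa using hx)
        exact Or.inl ⟨x.val, h1, x.val_lt,
          (PP_nat d n hn x.val h1 x.val_lt).1.1 (by simpa using h), by simp⟩
  have hMs : ∀ x : ZMod n, DihedralGroup.sr x ∈ M ↔ PP d n x := by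
    intro x
    subst hM ha hb
    simp only [DihedralGroup.one_def, DihedralGroup.r_one_pow, DihedralGroup.r_mul_sr,
      Set.mem_union, Set.mem_ofPred_eq, Set.mem_insert_iff, Set.mem_singleton_iff, zero_sub,
      DihedralGroup.sr.injEq, reduceCtorEq, and_false, exists_false, false_or]
    constructor
    · rintro (⟨i, h1, h2, h3, rfl⟩ | rfl)
      · exact (PP_nat d n hn i h1 h2).2.2 h3
      · exact PP_zero d n hn
    · intro h
      by_cases hx : x = 0
      · exact Or.inr hx
      · have h1 : 1 ≤ (-x).val := Nat.one_le_iff_ne_zero.2 (by simpa using hx)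
        exact Or.inl ⟨(-x).val, h1, (-x).val_lt,
          (PP_nat d n hn (-x).val h1 (-x).val_lt).2.1 (by simpa using h), by simp⟩
  have hCr : ∀ x : ZMod n, DihedralGroup.r x ∉ C := by
    intro x
    subst hC ha hb
    simp
  have hCs : ∀ x : ZMod n, DihedralGroup.sr x ∈ C ↔ ∃ k ≤ d, x + 3 ^ k = 0 := by
    intro x
    subst hC ha hb
    simp [eq_neg_iff_add_eq_zero]
  have hrr : ∀ x y : ZMod n, ¬ G.Adj (.r x) (.r y) := by
    intro x y; simp [hG, hCr]
  have hss : ∀ x y : ZMod n, ¬ G.Adj (.sr x) (.sr y) := by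
    intro x y; simp [hG, hCr]
  have hrs : ∀ x y : ZMod n, G.Adj (.r x) (.sr y) ↔ ∃ k ≤ d, x + y + 3 ^ k = 0 := by
    intro x y; simp [hG, hCs, add_comm y x]
  have hsr : ∀ x y : ZMod n, G.Adj (.sr x) (.r y) ↔ ∃ k ≤ d, x + y + 3 ^ k = 0 := by
    intro x y; rw [G.adj_comm, hrs, add_comm y x]
  constructor
  · let A : Set (ZMod n) := {x | PP d n x}
    have hMA : M = DihedralGroup.r '' A ∪ DihedralGroup.sr '' A := by
      ext (x | x)
      · simp [hMr, A]
      · simp [hMs, A]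
    have hri : Function.Injective (DihedralGroup.r : ZMod n → _) := fun x y h => by simpa using h
    have hsi : Function.Injective (DihedralGroup.sr : ZMod n → _) := fun x y h => by simpa using h
    have hdis : Disjoint (DihedralGroup.r '' A) (DihedralGroup.sr '' A) := by
      rw [Set.disjoint_left]
      rintro _ ⟨x, _, rfl⟩ ⟨y, _, h⟩
      simp at h
    rw [hMA, Set.ncard_union_eq hdis ((Set.toFinite A).image _) ((Set.toFinite A).image _),
      Set.ncard_image_of_injective _ hri, Set.ncard_image_of_injective _ hsi]
    have hneg : ((fun x : ZMod n => -x) '' A).ncard = A.ncard :=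
      Set.ncard_image_of_injective _ neg_injective
    have hmem : ∀ x, x ∈ (fun x : ZMod n => -x) '' A ↔ PP d n (-x) := by
      intro x
      constructor
      · rintro ⟨y, hy, rfl⟩; simpa [A] using hy
      · intro h; exact ⟨-x, h, by simp⟩
    have hU : A ∪ (fun x : ZMod n => -x) '' A = Set.univ := by
      ext x
      simp only [Set.mem_union, hmem, Set.mem_univ, iff_true]
      exact PP_total d n hn x
    have hI : A ∩ (fun x : ZMod n => -x) '' A = {0} := by
      ext x
      simp only [Set.mem_inter_iff, hmem, Set.mem_singleton_iff]
      constructor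
      · rintro ⟨h, h'⟩; exact PP_anti d n hn x h h'
      · rintro rfl
        have := PP_zero d n hn
        exact ⟨this, by simpa using this⟩
    have := Set.ncard_union_add_ncard_inter A ((fun x : ZMod n => -x) '' A)
      (Set.toFinite _) (Set.toFinite _)
    rw [hU, hI, hneg, Set.ncard_univ, Nat.card_zmod, Set.ncard_singleton] at this
    exact this.symm
  · rintro (x | x) hx
    · obtain ⟨y, ⟨h1, h2⟩, h3⟩ := PP_unique d n hn x ((hMr x).1 hx)
      refine ⟨.sr y, ⟨(hMs y).2 h1, (hrs x y).2 h2⟩, ?_⟩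
      rintro (z | z) ⟨h4, h5⟩
      · exact absurd h5 (hrr _ _)
      · rw [h3 z ⟨(hMs z).1 h4, (hrs x z).1 h5⟩]
    · obtain ⟨y, ⟨h1, h2⟩, h3⟩ := PP_unique d n hn x ((hMs x).1 hx)
      refine ⟨.r y, ⟨(hMr y).2 h1, (hsr x y).2 h2⟩, ?_⟩
      rintro (z | z) ⟨h4, h5⟩
      · rw [h3 z ⟨(hMr z).1 h4, (hsr x z).1 h5⟩]
      · exact absurd h5 (hss _ _)
end

section
/- Let n ≥ 2 and let SG_n = Cay(S_n, {(1 2),(1 3),…,(1 n)}) be the star graph. Then there exists a set K of permutations of {1,…,n} with 2·|K| > n! such that every element of K has at most one neighbor in K, i.e., the subgraph of SG_n induced by K has maximum degree at most 1. -/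
open Classical in
noncomputable def gfun (n : ℕ) [NeZero n] (σ : Equiv.Perm (Fin n)) : ℤ :=
  if ∃ i : Fin n, i ≠ 0 ∧ σ i = i then -(Equiv.Perm.sign σ : ℤ) else (Equiv.Perm.sign σ : ℤ)

def starMat (n : ℕ) [NeZero n] : Matrix (Fin n) (Fin n) ℤ :=
  fun i j => if i = j ∧ j ≠ 0 then 0 else 1

lemma starMat_det (n : ℕ) [NeZero n] : (starMat n).det ≠ 0 := by
  intro h
  obtain ⟨v, hv, hM⟩ := Matrix.exists_mulVec_eq_zero_iff.2 h
  have key : ∀ i, (starMat n).mulVec v i = (∑ j, v j) - if i ≠ 0 then v i else 0 := by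
    intro i
    have : ∀ j, starMat n i j * v j = v j - if i = j then (if i ≠ 0 then v i else 0) else 0 := by
      intro j
      unfold starMat
      by_cases hij : i = j
      · subst hij
        by_cases h0 : i = 0 <;> simp [h0]
      · simp [hij]
    simp only [Matrix.mulVec, dotProduct, this, Finset.sum_sub_distrib]
    simp
  have h0 : ∑ j, v j = 0 := by
    have := key 0
    rw [hM] at this
    simpa using this.symm
  have h1 : ∀ i, i ≠ 0 → v i = 0 := by
    intro i hi
    have := key i
    rw [hM] at this
    simpa [h0, hi] using this
  have h2 : v 0 = 0 := by
    rwa [Finset.sum_eq_single 0 (fun b _ hb => h1 b hb) (by simp)] at h0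
  apply hv
  funext i
  by_cases hi : i = 0
  · rw [hi, h2]; rfl
  · rw [h1 i hi]; rfl

lemma sum_sign (n : ℕ) (hn : 2 ≤ n) :
    ∑ σ : Equiv.Perm (Fin n), (Equiv.Perm.sign σ : ℤ) = 0 := by
  have h : (Matrix.of (fun _ _ => 1) : Matrix (Fin n) (Fin n) ℤ).det = 0 :=
    Matrix.det_zero_of_row_eq (i := ⟨0, by omega⟩) (j := ⟨1, by omega⟩) (by simp) rfl
  rw [Matrix.det_apply'] at h
  simpa using h

lemma sum_gfun (n : ℕ) [NeZero n] (hn : 2 ≤ n) :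
    ∑ σ : Equiv.Perm (Fin n), gfun n σ ≠ 0 := by
  have hd := starMat_det n
  have e : ∀ σ : Equiv.Perm (Fin n), gfun n σ
      = 2 * ((Equiv.Perm.sign σ : ℤ) * ∏ i, starMat n (σ i) i) - (Equiv.Perm.sign σ : ℤ) := by
    intro σ
    unfold gfun
    split_ifs with h
    · obtain ⟨i, hi, hs⟩ := h
      rw [Finset.prod_eq_zero (Finset.mem_univ i) (by simp [starMat, hi, hs])]
      ring
    · rw [Finset.prod_eq_one]
      · ring
      · intro i _
        unfold starMat
        rw [if_neg]
        rintro ⟨h1, h2⟩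
        exact h ⟨i, h2, h1⟩
  rw [Finset.sum_congr rfl (fun σ _ => e σ), Finset.sum_sub_distrib, sum_sign n hn,
    ← Finset.mul_sum]
  rw [Matrix.det_apply'] at hd
  simpa using hd

lemma gfun_one_or (n : ℕ) [NeZero n] (σ : Equiv.Perm (Fin n)) :
    gfun n σ = 1 ∨ gfun n σ = -1 := by
  unfold gfun
  rcases Int.units_eq_one_or (Equiv.Perm.sign σ) with h | h <;> rw [h] <;> split_ifs <;> simp

/-- Neighbours of `π` in the same class are all of the form `swap 0 r * π` for a fixed `r`. -/
lemma nbr_unique (n : ℕ) [NeZero n] (π : Equiv.Perm (Fin n)) :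
    ∃ r₀ : Fin n, ∀ r : Fin n, r ≠ 0 → gfun n (Equiv.swap 0 r * π) = gfun n π → r = r₀ := by
  have hs : ∀ r : Fin n, r ≠ 0 →
      (Equiv.Perm.sign (Equiv.swap 0 r * π) : ℤ) = -(Equiv.Perm.sign π : ℤ) := by
    intro r hr
    rw [Equiv.Perm.sign_mul, Equiv.Perm.sign_swap hr.symm]
    simp
  have hne : (Equiv.Perm.sign π : ℤ) ≠ 0 := by
    rcases Int.units_eq_one_or (Equiv.Perm.sign π) with h | h <;> rw [h] <;> simp
  by_cases h : ∃ i : Fin n, i ≠ 0 ∧ π i = i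
  · obtain ⟨i, hi, hp⟩ := h
    refine ⟨i, fun r hr hg => ?_⟩
    by_contra hri
    have h2 : ∃ i : Fin n, i ≠ 0 ∧ (Equiv.swap 0 r * π) i = i :=
      ⟨i, hi, by
        rw [Equiv.Perm.mul_apply, hp, Equiv.swap_apply_of_ne_of_ne hi (fun h => hri h.symm)]⟩
    unfold gfun at hg
    rw [if_pos h2, if_pos ⟨i, hi, hp⟩, hs r hr] at hg
    omega
  · refine ⟨π.symm 0, fun r hr hg => ?_⟩
    by_cases h2 : ∃ i : Fin n, i ≠ 0 ∧ (Equiv.swap 0 r * π) i = i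
    · obtain ⟨i, hi, hp⟩ := h2
      rw [Equiv.Perm.mul_apply] at hp
      by_cases h0 : π i = 0
      · rw [h0, Equiv.swap_apply_left] at hp
        rw [← h0, Equiv.symm_apply_apply, hp]
      · exfalso
        by_cases h1 : π i = r
        · rw [h1, Equiv.swap_apply_right] at hp
          exact hi hp.symm
        · rw [Equiv.swap_apply_of_ne_of_ne h0 h1] at hp
          exact h ⟨i, hi, hp⟩
    · exfalso
      unfold gfun at hg
      rw [if_neg h2, if_neg h, hs r hr] at hg
      omega

/-- The star graph `SG_n = Cay(S_n, {(1 2),…,(1 n)})` (vertices: permutations of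
`Fin n`, with `1` corresponding to `0`) has an induced subgraph on more than half
the vertices of maximum degree at most `1`. -/
theorem stmt3 (n : ℕ) [NeZero n] (hn : 2 ≤ n)
    (SG : SimpleGraph (Equiv.Perm (Fin n)))
    (hSG : SG = SimpleGraph.fromRel
      (fun π τ => ∃ r : Fin n, r ≠ 0 ∧ τ = Equiv.swap 0 r * π)) :
    ∃ K : Set (Equiv.Perm (Fin n)),
      2 * K.ncard > Nat.factorial n ∧
      ∀ π ∈ K, ({τ ∈ K | SG.Adj π τ} : Set (Equiv.Perm (Fin n))).ncard ≤ 1 := by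
  classical
  have deg : ∀ e : ℤ, ∀ π ∈ {σ : Equiv.Perm (Fin n) | gfun n σ = e},
      ({τ ∈ {σ : Equiv.Perm (Fin n) | gfun n σ = e} | SG.Adj π τ} :
        Set (Equiv.Perm (Fin n))).ncard ≤ 1 := by
    intro e π hπ
    obtain ⟨r₀, hr⟩ := nbr_unique n π
    have hsub : ({τ ∈ {σ : Equiv.Perm (Fin n) | gfun n σ = e} | SG.Adj π τ} :
        Set (Equiv.Perm (Fin n))) ⊆ {Equiv.swap 0 r₀ * π} := by
      rintro τ ⟨hτ, hadj⟩
      have hx : ∃ r : Fin n, r ≠ 0 ∧ τ = Equiv.swap 0 r * π := by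
        rw [hSG, SimpleGraph.fromRel_adj] at hadj
        rcases hadj.2 with h | ⟨r, h0, h⟩
        · exact h
        · exact ⟨r, h0, by rw [h, ← mul_assoc, Equiv.swap_mul_self, one_mul]⟩
      obtain ⟨r, h0, rfl⟩ := hx
      have := hr r h0 (Eq.trans hτ (Eq.symm hπ))
      rw [this]
      rfl
    calc _ ≤ ({Equiv.swap 0 r₀ * π} : Set (Equiv.Perm (Fin n))).ncard :=
          Set.ncard_le_ncard hsub (Set.finite_singleton _)
      _ = 1 := Set.ncard_singleton _
  have hcard : ∀ e : ℤ, ({σ : Equiv.Perm (Fin n) | gfun n σ = e}).ncard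
      = (Finset.univ.filter (fun σ : Equiv.Perm (Fin n) => gfun n σ = e)).card := by
    intro e
    rw [← Set.ncard_coe_finset]
    simp
  have hc : ∀ e : ℤ, (({σ : Equiv.Perm (Fin n) | gfun n σ = e}).ncard : ℤ)
      = ∑ σ : Equiv.Perm (Fin n), if gfun n σ = e then 1 else 0 := by
    intro e
    rw [hcard]
    simp
  have hsum : (({σ : Equiv.Perm (Fin n) | gfun n σ = 1}).ncard : ℤ)
      + ({σ : Equiv.Perm (Fin n) | gfun n σ = -1}).ncard = Nat.factorial n := by
    rw [hc, hc, ← Finset.sum_add_distrib, Finset.sum_congr rfl (g := fun _ => (1 : ℤ))]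
    · simp [Fintype.card_perm]
    · intro σ _
      rcases gfun_one_or n σ with h | h <;> simp [h]
  have hdiff : (({σ : Equiv.Perm (Fin n) | gfun n σ = 1}).ncard : ℤ)
      - ({σ : Equiv.Perm (Fin n) | gfun n σ = -1}).ncard ≠ 0 := by
    rw [hc, hc, ← Finset.sum_sub_distrib, Finset.sum_congr rfl (g := fun σ => gfun n σ)]
    · exact sum_gfun n hn
    · intro σ _
      rcases gfun_one_or n σ with h | h <;> simp [h]
  by_cases hlt : ({σ : Equiv.Perm (Fin n) | gfun n σ = -1}).ncard
      < ({σ : Equiv.Perm (Fin n) | gfun n σ = 1}).ncard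
  · exact ⟨_, by omega, deg 1⟩
  · exact ⟨_, by omega, deg (-1)⟩
end

section
/- Let n ≥ 2 and let SG_n = Cay(S_n, {(1 2),(1 3),…,(1 n)}) be the star graph. Then there exists a set K of permutations of {1,…,n} with |K| = n!/2 + 1 such that the subgraph of SG_n induced by K has maximum degree at most 1. -/
/-- `w` has no fixed point other than possibly `0`. -/
def NoFix {n : ℕ} [NeZero n] (w : Equiv.Perm (Fin n)) : Prop := ∀ x : Fin n, x ≠ 0 → w x ≠ x

lemma sum_sign_zero (n : ℕ) [NeZero n] (hn : 2 ≤ n) :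
    ∑ w : Equiv.Perm (Fin n), ((Equiv.Perm.sign w : ℤˣ) : ℤ) = 0 := by
  have h : (Matrix.of (fun _ _ : Fin n => (1 : ℤ))).det = 0 :=
    Matrix.det_zero_of_row_eq (i := ⟨0, by omega⟩) (j := ⟨1, by omega⟩) (by simp) rfl
  rw [Matrix.det_apply'] at h
  simpa using h

open Classical in
lemma sum_sign_noFix (n : ℕ) [NeZero n] :
    ∑ w : Equiv.Perm (Fin n), ((Equiv.Perm.sign w : ℤˣ) : ℤ) * (if NoFix w then 1 else 0)
      = (-1) ^ (n - 1) := by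
  let A : Matrix (Fin n) (Fin n) ℤ := Matrix.of (fun i j => if i = j ∧ i ≠ 0 then 0 else 1)
  let B : Matrix (Fin n) (Fin n) ℤ :=
    Matrix.of (fun i j => if i = 0 then 1 else if i = j then -1 else 0)
  have hAB : A.det = B.det := by
    refine Matrix.det_eq_of_forall_row_eq_smul_add_const (fun i => if i = 0 then 0 else 1) 0
      (by simp) ?_
    intro i j
    simp only [A, B, Matrix.of_apply]
    by_cases hi : i = 0 <;> by_cases hij : i = j <;> simp [hi, hij]
    · grind
  have hB : B.det = (-1) ^ (n - 1) := by
    rw [Matrix.det_of_upperTriangular]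
    · rw [← Finset.mul_prod_erase Finset.univ _ (Finset.mem_univ 0)]
      rw [Finset.prod_congr rfl (g := fun _ => (-1 : ℤ))]
      · simp [B, Finset.card_erase_of_mem]
      · intro i hi
        have := Finset.ne_of_mem_erase hi
        simp [B, this]
    · intro i j hij
      simp only [id] at hij
      have h0 : i ≠ 0 := by
        rintro rfl
        exact absurd hij (by simp)
      simp [B, h0, hij.ne']
  rw [← hB, ← hAB, Matrix.det_apply']
  refine Finset.sum_congr rfl fun w _ => ?_
  congr 1
  by_cases h : NoFix w
  · rw [if_pos h, Finset.prod_eq_one]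
    intro i _
    simp only [A, Matrix.of_apply]
    rw [if_neg]
    rintro ⟨h1, h2⟩
    rw [h1] at h2
    exact h i h2 h1
  · rw [if_neg h]
    unfold NoFix at h
    push Not at h
    obtain ⟨x, hx, hw⟩ := h
    symm
    apply Finset.prod_eq_zero (Finset.mem_univ x)
    simp [A, hw, hx]

/-- The star graph `SG_n = Cay(S_n, {(1 2),…,(1 n)})` (vertices: permutations of
`Fin n`, with `1` corresponding to `0`) has an induced subgraph on exactly
`n!/2 + 1` vertices of maximum degree at most `1`. -/
theorem stmt4 (n : ℕ) [NeZero n] (hn : 2 ≤ n)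
    (SG : SimpleGraph (Equiv.Perm (Fin n)))
    (hSG : SG = SimpleGraph.fromRel
      (fun π τ => ∃ r : Fin n, r ≠ 0 ∧ τ = Equiv.swap 0 r * π)) :
    ∃ K : Set (Equiv.Perm (Fin n)),
      K.ncard = Nat.factorial n / 2 + 1 ∧
      ∀ π ∈ K, ({τ ∈ K | SG.Adj π τ} : Set (Equiv.Perm (Fin n))).ncard ≤ 1 := by
  classical
  refine ⟨{w | NoFix w ↔ Equiv.Perm.sign w = (-1) ^ (n - 1)}, ?_, ?_⟩
  · have key : ∑ w : Equiv.Perm (Fin n),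
        (2 * (if (NoFix w ↔ Equiv.Perm.sign w = (-1) ^ (n - 1)) then (1 : ℤ) else 0) - 1) = 2 := by
      have h1 := sum_sign_zero n hn
      have h2 := sum_sign_noFix n
      have h3 : ∀ w : Equiv.Perm (Fin n),
          (2 * (if (NoFix w ↔ Equiv.Perm.sign w = (-1) ^ (n - 1)) then (1 : ℤ) else 0) - 1)
          = (-1) ^ (n - 1) * (2 * (((Equiv.Perm.sign w : ℤˣ) : ℤ) * (if NoFix w then 1 else 0))
            - ((Equiv.Perm.sign w : ℤˣ) : ℤ)) := by
        intro w
        rcases neg_one_pow_eq_or ℤˣ (n - 1) with h | h <;>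
        rcases Int.units_eq_one_or (Equiv.Perm.sign w) with h' | h' <;>
        by_cases hf : NoFix w <;>
        · have h4 := congrArg (Units.val) h
          push_cast at h4
          rw [h4, h, h']
          simp [hf]
      rw [Finset.sum_congr rfl (fun w _ => h3 w), ← Finset.mul_sum, Finset.sum_sub_distrib,
        ← Finset.mul_sum, h1, h2]
      rcases neg_one_pow_eq_or ℤ (n - 1) with h | h <;> simp [h]
    rw [Finset.sum_sub_distrib, ← Finset.mul_sum, Finset.sum_boole] at key
    simp only [Finset.sum_const, Finset.card_univ, Fintype.card_perm, Fintype.card_fin,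
      nsmul_eq_mul, mul_one] at key
    rw [Set.ncard_eq_toFinset_card', Set.toFinset_setOf]
    have h2 : 2 ∣ Nat.factorial n := Nat.dvd_factorial (by norm_num) hn
    push_cast at key
    omega
  · have hadj : ∀ π τ, SG.Adj π τ → ∃ r : Fin n, r ≠ 0 ∧ τ = Equiv.swap 0 r * π := by
      intro π τ h
      rw [hSG, SimpleGraph.fromRel_adj] at h
      obtain ⟨_, h | ⟨r, hr, h⟩⟩ := h
      · exact h
      · exact ⟨r, hr, by rw [h, ← mul_assoc, Equiv.swap_mul_self, one_mul]⟩
    intro π hπ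
    -- neighbours in the set flip the property NoFix
    have hflip : ∀ r : Fin n, r ≠ 0 →
        (NoFix (Equiv.swap 0 r * π) ↔ Equiv.Perm.sign (Equiv.swap 0 r * π) = (-1) ^ (n - 1)) →
        (NoFix (Equiv.swap 0 r * π) ↔ ¬ NoFix π) := by
      intro r hr h
      rw [Set.mem_setOf_eq] at hπ
      rw [h, hπ, Equiv.Perm.sign_mul, Equiv.Perm.sign_swap hr.symm]
      rcases neg_one_pow_eq_or ℤˣ (n - 1) with h | h <;>
      rcases Int.units_eq_one_or (Equiv.Perm.sign π) with h' | h' <;>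
      simp [h, h']
    have huniq : ∃ s : Fin n, ∀ r : Fin n, r ≠ 0 →
        (NoFix (Equiv.swap 0 r * π) ↔ ¬ NoFix π) → r = s := by
      by_cases hf : NoFix π
      · refine ⟨π.symm 0, fun r hr h => ?_⟩
        have h' : ¬ NoFix (Equiv.swap 0 r * π) := fun h2 => h.1 h2 hf
        unfold NoFix at h'
        push Not at h'
        obtain ⟨x, hx, hw⟩ := h'
        have := hf x hx
        rw [Equiv.Perm.mul_apply, Equiv.swap_apply_def] at hw
        rw [Equiv.eq_symm_apply]
        grind
      · have h' := hf
        unfold NoFix at h'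
        push Not at h'
        obtain ⟨y, hy, hw⟩ := h'
        refine ⟨y, fun r hr h => ?_⟩
        have := h.2 hf y hy
        rw [Equiv.Perm.mul_apply, Equiv.swap_apply_def] at this
        grind
    obtain ⟨s, hs⟩ := huniq
    rw [Set.ncard_le_one_iff]
    intro a b ha hb
    obtain ⟨ha1, ha2⟩ := ha
    obtain ⟨hb1, hb2⟩ := hb
    obtain ⟨r, hr, rfl⟩ := hadj _ _ ha2
    obtain ⟨t, ht, rfl⟩ := hadj _ _ hb2
    rw [hs r hr (hflip r hr ha1), hs t ht (hflip t ht hb1)]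
end

section
/- Let G be a d-regular simple graph on n vertices with d ≥ 1, and let K be a set of vertices such that the subgraph induced by K has maximum degree at most 1. Then (2d − 1)·|K| ≤ d·n. -/
/-- In a `d`-regular graph on `n` vertices, any vertex set `K` inducing a subgraph of
maximum degree at most `1` satisfies `(2d − 1)·|K| ≤ d·n`. -/
theorem stmt5 {V : Type*} [Fintype V] (G : SimpleGraph V) (d : ℕ) (hd : 1 ≤ d)
    (hreg : ∀ v : V, (G.neighborSet v).ncard = d)
    (K : Set V) (hK : ∀ v ∈ K, (K ∩ G.neighborSet v).ncard ≤ 1) :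
    (2 * d - 1) * K.ncard ≤ d * Fintype.card V := by
  classical
  have key : K.toFinset.card * (d - 1) ≤ Kᶜ.toFinset.card * d := by
    apply Finset.card_mul_le_card_mul G.Adj
    · intro a ha
      have ha' : a ∈ K := by simpa using ha
      have h1 := hK a ha'
      have h2 := Set.ncard_inter_add_ncard_diff_eq_ncard (G.neighborSet a) K (Set.toFinite _)
      rw [hreg a, Set.inter_comm] at h2
      have h3 : (G.neighborSet a \ K).ncard
          = (Finset.bipartiteAbove G.Adj Kᶜ.toFinset a).card := by
        rw [← Set.ncard_coe_finset]
        congr 1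
        ext x
        simp [Finset.mem_bipartiteAbove, and_comm]
      omega
    · intro b _
      rw [← hreg b, ← Set.ncard_coe_finset]
      apply Set.ncard_le_ncard _ (Set.toFinite _)
      intro x hx
      have hx' := (Finset.mem_bipartiteBelow G.Adj).1 (Finset.mem_coe.1 hx)
      exact hx'.2.symm
  rw [← Set.ncard_eq_toFinset_card', ← Set.ncard_eq_toFinset_card'] at key
  have hc := Set.ncard_add_ncard_compl K
  rw [Nat.card_eq_fintype_card] at hc
  rw [← hc]
  obtain ⟨e, rfl⟩ : ∃ e, d = e + 1 := ⟨d - 1, by omega⟩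
  have e1 : 2 * (e + 1) - 1 = 2 * e + 1 := by omega
  rw [e1]
  simp only [Nat.add_sub_cancel] at key
  nlinarith
end

section
/- Let m ≥ 1 and N = 2m+1. For m+1 ≤ k ≤ N define the map c_k on {1,…,N} by c_k(i) = i+m if i < k−m; c_k(i) = i+m+1 if k−m ≤ i ≤ m; c_k(i) = i−m if m < i < k; c_k(k) = k; and c_k(i) = i−m−1 if k < i ≤ N. Let Γ = S_N if m is odd and Γ = A_N (the alternating group) if m is even. Then: each c_k is a permutation of {1,…,N} of order 2 belonging to Γ; the set M = {π ∈ Γ | π(1) ≥ m+1} has exactly (m+1)·|Γ|/(2m+1) elements; and in the Cayley graph Cay(Γ, C) with C = {c_k | m+1 ≤ k ≤ N}, every element of M has exactly one neighbor in M (so M induces a perfect matching on a d/(2d−1)-fraction of the vertices, where d = m+1). -/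
/-- The map `c_k` on `{1,…,2m+1}` from Theorem `thm:alternatingtight`. -/
def ckFun (m k i : ℕ) : ℕ :=
  if i < k - m then i + m
  else if i ≤ m then i + m + 1
  else if i < k then i - m
  else if i = k then i
  else i - m - 1

theorem ckFun_bounds (m k i : ℕ) (h1 : m + 1 ≤ k) (h2 : k ≤ 2 * m + 1) (hi : 1 ≤ i)
    (hi' : i ≤ 2 * m + 1) : 1 ≤ ckFun m k i ∧ ckFun m k i ≤ 2 * m + 1 := by
  unfold ckFun
  split_ifs <;> omega

theorem ckFun_invol (m k i : ℕ) (h1 : m + 1 ≤ k) (h2 : k ≤ 2 * m + 1) (hi : 1 ≤ i)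
    (hi' : i ≤ 2 * m + 1) : ckFun m k (ckFun m k i) = i := by
  by_cases a : i < k - m
  · have : ckFun m k i = i + m := by simp [ckFun, a]
    rw [this]; unfold ckFun; split_ifs <;> omega
  by_cases b : i ≤ m
  · have : ckFun m k i = i + m + 1 := by simp [ckFun, a, b]
    rw [this]; unfold ckFun; split_ifs <;> omega
  by_cases c : i < k
  · have : ckFun m k i = i - m := by simp [ckFun, a, b, c]
    rw [this]; unfold ckFun; split_ifs <;> omega
  by_cases d : i = k
  · have : ckFun m k i = i := by unfold ckFun; split_ifs <;> omega
    rw [this, this]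
  · have : ckFun m k i = i - m - 1 := by simp [ckFun, a, b, c, d]
    rw [this]; unfold ckFun; split_ifs <;> omega

theorem ckFun_fixed (m k i : ℕ) (hm : 1 ≤ m) (h1 : m + 1 ≤ k) (hi : 1 ≤ i) :
    ckFun m k i = i ↔ i = k := by
  unfold ckFun
  split_ifs <;> omega

theorem ckFun_big (m k i : ℕ) (h1 : m + 1 ≤ k) (h2 : k ≤ 2 * m + 1)
    (hi : m + 1 ≤ i) (hi' : i ≤ 2 * m + 1) : m + 1 ≤ ckFun m k i ↔ i = k := by
  unfold ckFun
  split_ifs <;> omega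

/-- The permutation `c_k`. -/
def ckPerm (m k : ℕ) (h1 : m + 1 ≤ k) (h2 : k ≤ 2 * m + 1) :
    Equiv.Perm (Fin (2 * m + 1)) :=
  Function.Involutive.toPerm
    (fun i => ⟨ckFun m k (i + 1) - 1, by
      have := ckFun_bounds m k (i + 1) h1 h2 (by omega) (by omega); omega⟩)
    (by
      intro i
      ext
      have h := ckFun_bounds m k (i + 1) h1 h2 (by omega) (by omega)
      simp only
      rw [Nat.sub_add_cancel h.1, ckFun_invol m k (i + 1) h1 h2 (by omega) (by omega)]
      simp)

theorem ckPerm_val (m k : ℕ) (h1 : m + 1 ≤ k) (h2 : k ≤ 2 * m + 1) (i : Fin (2 * m + 1)) :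
    (ckPerm m k h1 h2 i : ℕ) + 1 = ckFun m k ((i : ℕ) + 1) := by
  have h := ckFun_bounds m k (i + 1) h1 h2 (by omega) (by omega)
  exact Nat.sub_add_cancel h.1

theorem ckPerm_sq (m k : ℕ) (h1 : m + 1 ≤ k) (h2 : k ≤ 2 * m + 1) :
    ckPerm m k h1 h2 * ckPerm m k h1 h2 = 1 := by
  ext i
  have a := ckPerm_val m k h1 h2 (ckPerm m k h1 h2 i)
  rw [ckPerm_val m k h1 h2 i, ckFun_invol m k (i + 1) h1 h2 (by omega) (by omega)] at a
  simpa using a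

theorem ckPerm_fixed (m k : ℕ) (hm : 1 ≤ m) (h1 : m + 1 ≤ k) (h2 : k ≤ 2 * m + 1)
    (i : Fin (2 * m + 1)) : ckPerm m k h1 h2 i = i ↔ (i : ℕ) + 1 = k := by
  rw [← ckFun_fixed m k (i + 1) hm h1 (by omega), ← ckPerm_val m k h1 h2 i, Fin.ext_iff]
  omega

theorem ckPerm_sign (m k : ℕ) (hm : 1 ≤ m) (h1 : m + 1 ≤ k) (h2 : k ≤ 2 * m + 1) :
    Equiv.Perm.sign (ckPerm m k h1 h2) = (-1) ^ m := by
  have hsq : ckPerm m k h1 h2 ^ 2 = 1 := by rw [sq, ckPerm_sq]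
  have hs : (ckPerm m k h1 h2).support = Finset.univ.erase ⟨k - 1, by omega⟩ := by
    ext i
    simp only [Equiv.Perm.mem_support, ne_eq, ckPerm_fixed m k hm, Finset.mem_erase,
      Finset.mem_univ, and_true, Fin.ext_iff]
    omega
  have hc : (ckPerm m k h1 h2).support.card = 2 * m := by
    rw [hs, Finset.card_erase_of_mem (Finset.mem_univ _)]; simp
  have hct := Equiv.Perm.cycleType_of_pow_prime_eq_one (p := 2) hsq
  have hsum := (ckPerm m k h1 h2).sum_cycleType
  rw [hct, Multiset.sum_replicate, hc, smul_eq_mul] at hsum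
  have hcard : (ckPerm m k h1 h2).cycleType.card = m := by omega
  rw [hcard] at hct
  rw [Equiv.Perm.sign_of_cycleType', hct]
  simp

theorem fiber_count {N : ℕ} (Γ : Subgroup (Equiv.Perm (Fin N))) (z : Fin N)
    (ht : ∀ j, ∃ g ∈ Γ, g z = j) (T : Finset (Fin N)) :
    {π | π ∈ Γ ∧ π z ∈ T}.ncard = T.card * {π | π ∈ Γ ∧ π z = z}.ncard := by
  classical
  have hf : ∀ j, {π | π ∈ Γ ∧ π z = j}.ncard = {π | π ∈ Γ ∧ π z = z}.ncard := by
    intro j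
    obtain ⟨g, hg, hgj⟩ := ht j
    have : {π | π ∈ Γ ∧ π z = j} = (fun π => g * π) '' {π | π ∈ Γ ∧ π z = z} := by
      ext π
      constructor
      · rintro ⟨h, h'⟩
        refine ⟨g⁻¹ * π, ⟨Γ.mul_mem (Γ.inv_mem hg) h, ?_⟩, by simp⟩
        rw [Equiv.Perm.mul_apply, h', ← hgj]; simp
      · rintro ⟨π, ⟨h, h'⟩, rfl⟩
        exact ⟨Γ.mul_mem hg h, by simp [h', hgj]⟩
    rw [this, Set.ncard_image_of_injective _ (mul_right_injective g)]
  induction T using Finset.induction_on with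
  | empty => simp
  | insert a s ha ih =>
    have : {π | π ∈ Γ ∧ π z ∈ insert a s} = {π | π ∈ Γ ∧ π z = a} ∪ {π | π ∈ Γ ∧ π z ∈ s} := by
      ext π; simp only [Finset.mem_insert, Set.mem_ofPred_eq, Set.mem_union]; tauto
    rw [this, Set.ncard_union_eq ?_ (Set.toFinite _) (Set.toFinite _), ih, hf,
      Finset.card_insert_of_notMem ha]
    · ring
    · rw [Set.disjoint_left]
      rintro π ⟨_, h⟩ ⟨_, h'⟩
      exact ha (h ▸ h')

/-- For `N = 2m+1` and `Γ = S_N` (`m` odd) resp. `Γ = A_N` (`m` even):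
each `c_k` (for `m+1 ≤ k ≤ N`) is an order-2 permutation belonging to `Γ`; the set
`M = {π ∈ Γ | π(1) ≥ m+1}` has exactly `(m+1)·|Γ|/(2m+1)` elements; and in the Cayley
graph `Cay(Γ, {c_k})` (with the paper's convention `π·σ = σ ∘ π`, i.e. `σ * π` in
Mathlib) every element of `M` has exactly one neighbor in `M`.
Here `{1,…,N}` is modelled by `Fin N`, via the 1-based value `(i : ℕ) + 1`. -/
theorem stmt6 (m : ℕ) (hm : 1 ≤ m) (N : ℕ) (hN : N = 2 * m + 1)
    (Γ : Subgroup (Equiv.Perm (Fin N)))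
    (hΓ : Γ = if Odd m then (⊤ : Subgroup (Equiv.Perm (Fin N)))
              else alternatingGroup (Fin N))
    (M : Set (Equiv.Perm (Fin N)))
    (hM : M = {π | π ∈ Γ ∧ m + 1 ≤ ((π ⟨0, by omega⟩ : Fin N) : ℕ) + 1})
    (C : Set (Equiv.Perm (Fin N)))
    (hC : C = {σ | ∃ k, m + 1 ≤ k ∧ k ≤ N ∧
      ∀ i : Fin N, ((σ i : ℕ) + 1) = ckFun m k ((i : ℕ) + 1)}) :
    (∀ k, m + 1 ≤ k → k ≤ N →
      ∃ σ : Equiv.Perm (Fin N),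
        (∀ i : Fin N, ((σ i : ℕ) + 1) = ckFun m k ((i : ℕ) + 1)) ∧
        σ * σ = 1 ∧ σ ≠ 1 ∧ σ ∈ Γ) ∧
    M.ncard * (2 * m + 1) = (m + 1) * Nat.card Γ ∧
    (∀ π ∈ M, ∃! τ, τ ∈ M ∧ ∃ σ ∈ C, τ = σ * π) := by
  subst hN
  have hk : ∀ k (h1 : m + 1 ≤ k) (h2 : k ≤ 2 * m + 1), ckPerm m k h1 h2 ∈ Γ := by
    intro k h1 h2
    rw [hΓ]
    split_ifs with ho
    · trivial
    · rw [Equiv.Perm.mem_alternatingGroup, ckPerm_sign m k hm h1 h2]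
      exact (Nat.not_odd_iff_even.1 ho).neg_one_pow
  refine ⟨?_, ?_, ?_⟩
  · intro k h1 h2
    refine ⟨ckPerm m k h1 h2, ckPerm_val m k h1 h2, ckPerm_sq m k h1 h2, ?_, hk k h1 h2⟩
    intro h
    have a := (ckPerm_fixed m k hm h1 h2 ⟨0, by omega⟩).1 (by rw [h]; rfl)
    simp only at a
    omega
  · have ht : ∀ j, ∃ g ∈ Γ, g (⟨0, by omega⟩ : Fin (2 * m + 1)) = j := by
      intro j
      rw [hΓ]
      split_ifs with ho
      · exact ⟨Equiv.swap ⟨0, by omega⟩ j, trivial, Equiv.swap_apply_left _ _⟩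
      · have := alternatingGroup.isPretransitive_of_three_le_card (Fin (2 * m + 1))
          (by simp; omega)
        obtain ⟨g, hg⟩ := MulAction.exists_smul_eq (alternatingGroup (Fin (2 * m + 1)))
          (⟨0, by omega⟩ : Fin (2 * m + 1)) j
        exact ⟨g, g.2, hg⟩
    have hA := fiber_count Γ _ ht Finset.univ
    have hB := fiber_count Γ _ ht (Finset.Ici ⟨m, by omega⟩)
    have e1 : {π | π ∈ Γ ∧ π (⟨0, by omega⟩ : Fin (2 * m + 1)) ∈ (Finset.univ : Finset (Fin (2 * m + 1)))}.ncard
        = Nat.card Γ := by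
      simp only [Finset.mem_univ, and_true]
      exact (Nat.card_coe_set_eq (Γ : Set (Equiv.Perm (Fin (2 * m + 1))))).symm
    have e2 : M = {π | π ∈ Γ ∧ π (⟨0, by omega⟩ : Fin (2 * m + 1)) ∈
        Finset.Ici (⟨m, by omega⟩ : Fin (2 * m + 1))} := by
      rw [hM]; ext π
      simp [Fin.le_def]
    have e3 : (Finset.Ici (⟨m, by omega⟩ : Fin (2 * m + 1))).card = m + 1 := by
      rw [Fin.card_Ici]; simp only; omega
    rw [e1] at hA
    rw [← e2, e3] at hB
    rw [hA, hB]
    simp only [Finset.card_univ, Fintype.card_fin]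
    ring
  · intro π hπ
    rw [hM] at hπ
    obtain ⟨hπΓ, hπ0⟩ := hπ
    have hlt := (π ⟨0, by omega⟩).2
    refine ⟨ckPerm m _ hπ0 hlt * π, ⟨?_, ckPerm m _ hπ0 hlt, ?_, rfl⟩, ?_⟩
    · rw [hM]
      refine ⟨Γ.mul_mem (hk _ _ _) hπΓ, ?_⟩
      rw [Equiv.Perm.mul_apply, ckPerm_val, ckFun_big m _ _ hπ0 hlt hπ0 hlt]
    · rw [hC]
      exact ⟨_, hπ0, hlt, ckPerm_val m _ hπ0 hlt⟩
    · rintro τ ⟨hτ, σ, hσ, rfl⟩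
      rw [hC] at hσ
      obtain ⟨k, h1, h2, hσ⟩ := hσ
      rw [hM] at hτ
      have h3 := hτ.2
      rw [Equiv.Perm.mul_apply, hσ, ckFun_big m k _ h1 h2 hπ0 hlt] at h3
      subst h3
      congr 1
      ext i
      have a := hσ i
      rw [← ckPerm_val m _ hπ0 hlt] at a
      omega
end

section
/- Let m ≥ 1 and N = 2m+1, and let Γ = S_N if m is odd and Γ = A_N if m is even. Suppose C = {c_k | m+1 ≤ k ≤ N} ⊆ Γ is any set of permutations such that each c_k has order 2, c_k(k) = k, and c_k(i) ≤ m for every i with m+1 ≤ i ≤ N and i ≠ k. Then the set M = {π ∈ Γ | π(1) ≥ m+1} has exactly (m+1)·|Γ|/(2m+1) elements and every element of M has exactly one neighbor in M in the Cayley graph Cay(Γ, C). -/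
/-- For `N = 2m+1` and `Γ = S_N` (`m` odd) resp. `Γ = A_N` (`m` even): if
`C = {c_k | m+1 ≤ k ≤ N} ⊆ Γ` consists of order-2 permutations with `c_k(k) = k`
and `c_k(i) ≤ m` for all `m+1 ≤ i ≤ N` with `i ≠ k`, then `M = {π ∈ Γ | π(1) ≥ m+1}`
has exactly `(m+1)·|Γ|/(2m+1)` elements and every element of `M` has exactly one
neighbor in `M` in `Cay(Γ, C)` (neighbors of `π` are the products `c_k * π`, i.e.
`π·c_k` in the paper's convention).  `{1,…,N}` is modelled by `Fin N` via the
1-based value `(i : ℕ) + 1`. -/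
theorem stmt7 (m : ℕ) (hm : 1 ≤ m) (N : ℕ) (hN : N = 2 * m + 1)
    (Γ : Subgroup (Equiv.Perm (Fin N)))
    (hΓ : Γ = if Odd m then (⊤ : Subgroup (Equiv.Perm (Fin N)))
              else alternatingGroup (Fin N))
    (c : ℕ → Equiv.Perm (Fin N))
    (hmem : ∀ k, m + 1 ≤ k → k ≤ N → c k ∈ Γ)
    (hord : ∀ k, m + 1 ≤ k → k ≤ N → c k * c k = 1 ∧ c k ≠ 1)
    (hfix : ∀ k (h1 : m + 1 ≤ k) (h2 : k ≤ N),
      c k ⟨k - 1, by omega⟩ = (⟨k - 1, by omega⟩ : Fin N))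
    (hsmall : ∀ k, m + 1 ≤ k → k ≤ N → ∀ i : Fin N,
      m + 1 ≤ (i : ℕ) + 1 → (i : ℕ) + 1 ≠ k → ((c k i : ℕ) + 1) ≤ m)
    (M : Set (Equiv.Perm (Fin N)))
    (hM : M = {π | π ∈ Γ ∧ m + 1 ≤ ((π ⟨0, by omega⟩ : Fin N) : ℕ) + 1}) :
    M.ncard * (2 * m + 1) = (m + 1) * Nat.card Γ ∧
    ∀ π ∈ M, ∃! τ, τ ∈ M ∧ ∃ k, m + 1 ≤ k ∧ k ≤ N ∧ τ = c k * π := by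
  classical
  have hA : alternatingGroup (Fin N) ≤ Γ := by
    rw [hΓ]; split_ifs
    · exact le_top
    · exact le_rfl
  have htr : ∀ i j : Fin N, ∃ g ∈ Γ, g i = j := by
    intro i j
    have h := alternatingGroup.isPretransitive_of_three_le_card (Fin N) (by simp; omega)
    obtain ⟨g, hg⟩ := h.exists_smul_eq i j
    exact ⟨g, hA g.2, hg⟩
  set z : Fin N := ⟨0, by omega⟩ with hz
  subst hM
  constructor
  · have hfib : ∀ j : Fin N,
        (Finset.univ.filter (fun π : Equiv.Perm (Fin N) => π ∈ Γ ∧ π z = j)).card =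
        (Finset.univ.filter (fun π : Equiv.Perm (Fin N) => π ∈ Γ ∧ π z = z)).card := by
      intro j
      obtain ⟨g, hg, hgj⟩ := htr z j
      symm
      apply Finset.card_bij (fun π _ => g * π)
      · intro π hπ
        simp only [Finset.mem_filter, Finset.mem_univ, true_and] at hπ ⊢
        exact ⟨Γ.mul_mem hg hπ.1, by simp [hπ.2, hgj]⟩
      · intro a _ b _ h
        exact mul_left_cancel h
      · intro π hπ
        simp only [Finset.mem_filter, Finset.mem_univ, true_and] at hπ
        refine ⟨g⁻¹ * π, ?_, by simp⟩
        simp only [Finset.mem_filter, Finset.mem_univ, true_and]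
        refine ⟨Γ.mul_mem (Γ.inv_mem hg) hπ.1, ?_⟩
        rw [Equiv.Perm.mul_apply, hπ.2, ← hgj]
        simp
    set K := (Finset.univ.filter (fun π : Equiv.Perm (Fin N) => π ∈ Γ ∧ π z = z)).card with hK
    have key : ∀ S : Finset (Fin N),
        (Finset.univ.filter (fun π : Equiv.Perm (Fin N) => π ∈ Γ ∧ π z ∈ S)).card
          = S.card * K := by
      intro S
      rw [Finset.card_eq_sum_card_fiberwise (f := fun π => π z) (t := S)]
      · rw [← smul_eq_mul, ← Finset.sum_const]
        apply Finset.sum_congr rfl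
        intro j hj
        rw [← hfib j, Finset.filter_filter]
        congr 1
        ext π
        simp only [Finset.mem_filter, Finset.mem_univ, true_and]
        constructor
        · rintro ⟨⟨h1, _⟩, h2⟩
          exact ⟨h1, h2⟩
        · rintro ⟨h1, h2⟩
          exact ⟨⟨h1, h2 ▸ hj⟩, h2⟩
      · intro π hπ
        simp only [Finset.coe_filter, Finset.mem_univ, true_and, Set.mem_ofPred_eq] at hπ
        exact hπ.2
    have h1 : Nat.card Γ = (2 * m + 1) * K := by
      have := key Finset.univ
      simp only [Finset.mem_univ, and_true, Finset.card_univ, Fintype.card_fin] at this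
      rw [← hN, ← this, Nat.card_eq_fintype_card, Fintype.card_subtype]
    have h2 : {π : Equiv.Perm (Fin N) | π ∈ Γ ∧ m + 1 ≤ ((π z : Fin N) : ℕ) + 1}.ncard
        = (m + 1) * K := by
      have h3 : (Finset.Ici (⟨m, by omega⟩ : Fin N)).card = m + 1 := by
        rw [Fin.card_Ici]; simp; omega
      have h4 := key (Finset.Ici (⟨m, by omega⟩ : Fin N))
      rw [h3] at h4
      rw [← h4, ← Set.ncard_coe_finset]
      congr 1
      ext π
      simp [Fin.le_def]
    rw [h1, h2]; ring
  · rintro π ⟨hπ, hπz⟩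
    have hlt := (π z).2
    refine ⟨c (π z + 1) * π, ⟨⟨Γ.mul_mem (hmem _ hπz (by omega)) hπ, ?_⟩,
      (π z : ℕ) + 1, hπz, by omega, rfl⟩, ?_⟩
    · have := hfix ((π z : ℕ) + 1) hπz (by omega)
      simp only [Nat.add_sub_cancel, Fin.eta] at this
      rw [Equiv.Perm.mul_apply, this]
      exact hπz
    · rintro τ ⟨⟨_, hτ⟩, k, hk1, hk2, rfl⟩
      by_cases h : (π z : ℕ) + 1 = k
      · rw [h]
      · have := hsmall k hk1 hk2 (π z) hπz h
        rw [Equiv.Perm.mul_apply] at hτ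
        omega
end

section
/- Let G and H be finite simple graphs and k, ℓ nonnegative integers. Suppose V(G) = A ⊔ B is a partition with Δ(G[A]) ≤ k and Δ(G[B]) ≤ k, and V(H) = A' ⊔ B' is a partition with Δ(H[A']) ≤ ℓ and Δ(H[B']) ≤ ℓ. Let A'' = (A×A') ∪ (B×B') and B'' = (A×B') ∪ (B×A'). Then A'' ⊔ B'' is a partition of V(G □ H), the subgraphs of G □ H induced by A'' and by B'' each have maximum degree at most k+ℓ, and |A''| − |B''| = (|A|−|B|)·(|A'|−|B'|). Consequently ι_k(G)·ι_ℓ(H) ≤ ι_{k+ℓ}(G □ H). -/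
/-- The `k`-imbalance `ι_k(G)`: the largest `d` such that the vertex set of `G` can be
partitioned into sets `A ⊔ B`, each inducing maximum degree at most `k`,
with `|A| − |B| = d`. -/
noncomputable def iotaImb {V : Type*} (G : SimpleGraph V) (k : ℕ) : ℕ :=
  sSup {d : ℕ | ∃ A B : Set V, A ∪ B = Set.univ ∧ Disjoint A B ∧
    (∀ v ∈ A, (A ∩ G.neighborSet v).ncard ≤ k) ∧
    (∀ v ∈ B, (B ∩ G.neighborSet v).ncard ≤ k) ∧
    A.ncard = B.ncard + d}

lemma deg_aux {V V' : Type*} [Fintype V] [Fintype V']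
    (G : SimpleGraph V) (H : SimpleGraph V') (k l : ℕ) (P Q : Set V) (P' Q' : Set V')
    (hd : Disjoint P Q) (hd' : Disjoint P' Q')
    (x : V) (y : V') (hx : x ∈ P) (hy : y ∈ P')
    (h1 : (P ∩ G.neighborSet x).ncard ≤ k) (h2 : (P' ∩ H.neighborSet y).ncard ≤ l) :
    ((P ×ˢ P' ∪ Q ×ˢ Q') ∩ (G.boxProd H).neighborSet (x, y)).ncard ≤ k + l := by
  have hxQ : x ∉ Q := Set.disjoint_left.mp hd hx
  have hyQ : y ∉ Q' := Set.disjoint_left.mp hd' hy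
  have hsub : (P ×ˢ P' ∪ Q ×ˢ Q') ∩ (G.boxProd H).neighborSet (x, y) ⊆
      (fun a => (a, y)) '' (P ∩ G.neighborSet x) ∪
        (fun b => (x, b)) '' (P' ∩ H.neighborSet y) := by
    rintro ⟨a, b⟩ ⟨hab, hn⟩
    simp only [SimpleGraph.mem_neighborSet, SimpleGraph.boxProd_adj] at hn
    simp only [Set.mem_union, Set.mem_prod] at hab
    rcases hn with ⟨hn, rfl⟩ | ⟨hn, rfl⟩
    · left
      exact ⟨a, ⟨by tauto, hn⟩, rfl⟩
    · right
      exact ⟨b, ⟨by tauto, hn⟩, rfl⟩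
  calc _ ≤ _ := Set.ncard_le_ncard hsub (Set.toFinite _)
    _ ≤ _ := Set.ncard_union_le _ _
    _ ≤ k + l := add_le_add ((Set.ncard_image_le (Set.toFinite _)).trans h1)
        ((Set.ncard_image_le (Set.toFinite _)).trans h2)

lemma deg_aux2 {V V' : Type*} [Fintype V] [Fintype V']
    (G : SimpleGraph V) (H : SimpleGraph V') (k l : ℕ) (P Q : Set V) (P' Q' : Set V')
    (hd : Disjoint P Q) (hd' : Disjoint P' Q')
    (hP : ∀ v ∈ P, (P ∩ G.neighborSet v).ncard ≤ k)
    (hQ : ∀ v ∈ Q, (Q ∩ G.neighborSet v).ncard ≤ k)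
    (hP' : ∀ v ∈ P', (P' ∩ H.neighborSet v).ncard ≤ l)
    (hQ' : ∀ v ∈ Q', (Q' ∩ H.neighborSet v).ncard ≤ l) :
    ∀ v ∈ P ×ˢ P' ∪ Q ×ˢ Q',
      ((P ×ˢ P' ∪ Q ×ˢ Q') ∩ (G.boxProd H).neighborSet v).ncard ≤ k + l := by
  rintro ⟨x, y⟩ (⟨hx, hy⟩ | ⟨hx, hy⟩)
  · exact deg_aux G H k l P Q P' Q' hd hd' x y hx hy (hP x hx) (hP' y hy)
  · rw [Set.union_comm]
    exact deg_aux G H k l Q P Q' P' hd.symm hd'.symm x y hx hy (hQ x hx) (hQ' y hy)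

lemma card_aux {V V' : Type*} [Fintype V] [Fintype V'] (P Q : Set V) (P' Q' : Set V')
    (hd : Disjoint P Q) :
    (P ×ˢ P' ∪ Q ×ˢ Q').ncard = P.ncard * P'.ncard + Q.ncard * Q'.ncard := by
  rw [Set.ncard_union_eq (Set.disjoint_prod.mpr (Or.inl hd)) (Set.toFinite _) (Set.toFinite _),
    Set.ncard_prod, Set.ncard_prod]

lemma part_aux {V V' : Type*} (A B : Set V) (A' B' : Set V')
    (hAB : A ∪ B = Set.univ) (hAB' : A' ∪ B' = Set.univ)
    (hdisj : Disjoint A B) (hdisj' : Disjoint A' B') :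
    (A ×ˢ A' ∪ B ×ˢ B') ∪ (A ×ˢ B' ∪ B ×ˢ A') = Set.univ ∧
      Disjoint (A ×ˢ A' ∪ B ×ˢ B') (A ×ˢ B' ∪ B ×ˢ A') := by
  constructor
  · ext ⟨x, y⟩
    have hx : x ∈ A ∪ B := hAB ▸ Set.mem_univ x
    have hy : y ∈ A' ∪ B' := hAB' ▸ Set.mem_univ y
    simp only [Set.mem_union, Set.mem_prod, Set.mem_univ, iff_true] at *
    tauto
  · rw [Set.disjoint_left]
    rintro ⟨x, y⟩ h1 h2
    have hx : x ∈ A → x ∉ B := fun h => Set.disjoint_left.mp hdisj h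
    have hy : y ∈ A' → y ∉ B' := fun h => Set.disjoint_left.mp hdisj' h
    simp only [Set.mem_union, Set.mem_prod] at *
    tauto

lemma nonempty_aux {S : Set ℕ} (h : 0 < sSup S) : S.Nonempty := by
  by_contra hn
  rw [Set.not_nonempty_iff_eq_empty] at hn
  subst hn
  simp at h

lemma bdd_aux {V : Type*} [Fintype V] (G : SimpleGraph V) (k : ℕ) :
    BddAbove {d : ℕ | ∃ A B : Set V, A ∪ B = Set.univ ∧ Disjoint A B ∧
    (∀ v ∈ A, (A ∩ G.neighborSet v).ncard ≤ k) ∧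
    (∀ v ∈ B, (B ∩ G.neighborSet v).ncard ≤ k) ∧
    A.ncard = B.ncard + d} := by
  refine ⟨Nat.card V, ?_⟩
  rintro d ⟨A, B, -, -, -, -, h⟩
  have := Set.ncard_le_card A
  omega

lemma iota_aux {V V' : Type*} [Fintype V] [Fintype V']
    (G : SimpleGraph V) (H : SimpleGraph V') (k l : ℕ) :
    iotaImb G k * iotaImb H l ≤ iotaImb (G.boxProd H) (k + l) := by
  rcases Nat.eq_zero_or_pos (iotaImb G k) with h0 | h0
  · simp [h0]
  rcases Nat.eq_zero_or_pos (iotaImb H l) with h0' | h0'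
  · simp [h0']
  have m1 := Nat.sSup_mem (nonempty_aux h0) (bdd_aux G k)
  have m2 := Nat.sSup_mem (nonempty_aux h0') (bdd_aux H l)
  obtain ⟨A, B, hAB, hd, hA, hB, hc⟩ := m1
  obtain ⟨A', B', hAB', hd', hA', hB', hc'⟩ := m2
  obtain ⟨p1, p2⟩ := part_aux A B A' B' hAB hAB' hd hd'
  refine le_csSup (bdd_aux (G.boxProd H) (k + l)) ⟨_, _, p1, p2,
    deg_aux2 G H k l A B A' B' hd hd' hA hB hA' hB',
    deg_aux2 G H k l A B B' A' hd hd'.symm hA hB hB' hA', ?_⟩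
  rw [card_aux _ _ _ _ hd, card_aux _ _ _ _ hd, hc, hc']
  unfold iotaImb
  ring

/-- Combining a partition `A ⊔ B` of `V(G)` witnessing degree bound `k` and a partition
`A' ⊔ B'` of `V(H)` witnessing degree bound `ℓ`, the sets `A'' = A×A' ∪ B×B'` and
`B'' = A×B' ∪ B×A'` partition `V(G □ H)`, each induces maximum degree at most `k+ℓ`
in the box product, and `|A''| − |B''| = (|A|−|B|)·(|A'|−|B'|)`.
Consequently `ι_k(G)·ι_ℓ(H) ≤ ι_{k+ℓ}(G □ H)`. -/
theorem stmt9 {V V' : Type*} [Fintype V] [Fintype V']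
    (G : SimpleGraph V) (H : SimpleGraph V') (k l : ℕ)
    (A B : Set V) (hAB : A ∪ B = Set.univ) (hdisj : Disjoint A B)
    (hA : ∀ v ∈ A, (A ∩ G.neighborSet v).ncard ≤ k)
    (hB : ∀ v ∈ B, (B ∩ G.neighborSet v).ncard ≤ k)
    (A' B' : Set V') (hAB' : A' ∪ B' = Set.univ) (hdisj' : Disjoint A' B')
    (hA' : ∀ v ∈ A', (A' ∩ H.neighborSet v).ncard ≤ l)
    (hB' : ∀ v ∈ B', (B' ∩ H.neighborSet v).ncard ≤ l)
    (A'' B'' : Set (V × V'))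
    (hA'' : A'' = A ×ˢ A' ∪ B ×ˢ B') (hB'' : B'' = A ×ˢ B' ∪ B ×ˢ A') :
    A'' ∪ B'' = Set.univ ∧ Disjoint A'' B'' ∧
    (∀ v ∈ A'', (A'' ∩ (G.boxProd H).neighborSet v).ncard ≤ k + l) ∧
    (∀ v ∈ B'', (B'' ∩ (G.boxProd H).neighborSet v).ncard ≤ k + l) ∧
    (A''.ncard : ℤ) - (B''.ncard : ℤ)
      = ((A.ncard : ℤ) - (B.ncard : ℤ)) * ((A'.ncard : ℤ) - (B'.ncard : ℤ)) ∧
    iotaImb G k * iotaImb H l ≤ iotaImb (G.boxProd H) (k + l) := by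
  subst hA'' hB''
  obtain ⟨p1, p2⟩ := part_aux A B A' B' hAB hAB' hdisj hdisj'
  refine ⟨p1, p2, deg_aux2 G H k l A B A' B' hdisj hdisj' hA hB hA' hB',
    deg_aux2 G H k l A B B' A' hdisj hdisj'.symm hA hB hB' hA', ?_, iota_aux G H k l⟩
  rw [card_aux _ _ _ _ hdisj, card_aux _ _ _ _ hdisj]
  push_cast
  ring
end

section
/- For every integer d ≥ 1, the vertex set {0,1}^d of the d-dimensional hypercube Q_d admits a partition into sets A and B such that the subgraph of Q_d induced by A and the subgraph induced by B each have maximum degree at most ⌈√d⌉, and |A| − |B| ≥ 2. In particular, Q_d has an induced subgraph on 2^{d−1} + 1 vertices with maximum degree at most ⌈√d⌉. -/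
/-- The `d`-dimensional hypercube graph on `{0,1}^d`: two vertices are adjacent iff
they differ in exactly one coordinate. -/
def cubeGraph (d : ℕ) : SimpleGraph (Fin d → Bool) :=
  SimpleGraph.fromRel (fun x y => hammingDist x y = 1)

open Finset in
theorem aux_adj {d : ℕ} {v w : Fin d → Bool} (h : (cubeGraph d).Adj v w) :
    ∃ i, w = Function.update v i (!(v i)) := by
  have h1 : hammingDist v w = 1 := by
    rw [cubeGraph, SimpleGraph.fromRel_adj] at h
    rcases h with ⟨_, h | h⟩
    · exact h
    · rwa [hammingDist_comm]
  unfold hammingDist at h1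
  obtain ⟨i, hi⟩ := Finset.card_eq_one.mp h1
  refine ⟨i, ?_⟩
  funext x
  have hx := Finset.ext_iff.mp hi x
  simp only [Finset.mem_filter, Finset.mem_univ, true_and, Finset.mem_singleton] at hx
  by_cases hxi : x = i
  · subst hxi
    have := hx.mpr rfl
    simp only [Function.update_self]
    cases hv : v x <;> cases hw : w x <;> simp_all
  · rw [Function.update_of_ne hxi]
    by_contra hne
    exact hxi (hx.mp (fun h => hne h.symm))

/-- Some block is contained in the set coded by `v`. -/
def hasBlock {d k : ℕ} (g : Fin d → Fin k) (v : Fin d → Bool) : Prop :=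
  ∃ j, ∀ i, g i = j → v i = true

/-- The parity sign. -/
def chi {d : ℕ} (v : Fin d → Bool) : ℤ := ∏ i, (if v i then -1 else 1)

open Classical in
/-- The colouring. -/
noncomputable def col {d k : ℕ} (g : Fin d → Fin k) (v : Fin d → Bool) : ℤ :=
  chi v * (if hasBlock g v then -1 else 1)

theorem chi_sq {d : ℕ} (v : Fin d → Bool) : chi v = 1 ∨ chi v = -1 := by
  unfold chi
  apply Finset.prod_induction _ (fun z : ℤ => z = 1 ∨ z = -1)
  · rintro a b (rfl | rfl) (rfl | rfl) <;> simp
  · simp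
  · intro i _
    split_ifs <;> simp

theorem col_sq {d k : ℕ} (g : Fin d → Fin k) (v : Fin d → Bool) :
    col g v = 1 ∨ col g v = -1 := by
  unfold col
  rcases chi_sq v with h | h <;> rw [h] <;> split_ifs <;> simp

theorem chi_flip {d : ℕ} (v : Fin d → Bool) (i : Fin d) :
    chi (Function.update v i (!(v i))) = - chi v := by
  unfold chi
  rw [← Finset.mul_prod_erase _ _ (Finset.mem_univ i),
    ← Finset.mul_prod_erase (Finset.univ) (fun i => if v i then (-1 : ℤ) else 1)
      (Finset.mem_univ i)]
  have : ∏ x ∈ Finset.univ.erase i,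
      (if (Function.update v i (!(v i)) x) then (-1 : ℤ) else 1) =
      ∏ x ∈ Finset.univ.erase i, (if v x then (-1 : ℤ) else 1) := by
    apply Finset.prod_congr rfl
    intro x hx
    rw [Function.update_of_ne (Finset.ne_of_mem_erase hx)]
  rw [this]
  cases h : v i <;> simp

theorem col_flip {d k : ℕ} (g : Fin d → Fin k) (v : Fin d → Bool) (i : Fin d)
    (h : col g (Function.update v i (!(v i))) = col g v) :
    ¬ (hasBlock g (Function.update v i (!(v i))) ↔ hasBlock g v) := by
  intro hiff
  unfold col at h
  rw [chi_flip] at h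
  rcases chi_sq v with h' | h' <;> rw [h'] at h <;> by_cases hp : hasBlock g v <;>
    simp [hiff, hp] at h

open Classical in
theorem deg_bound {d k : ℕ} (g : Fin d → Fin k)
    (hf : ∀ j, (Finset.univ.filter (fun i => g i = j)).card ≤ k) (e : ℤ)
    (v : Fin d → Bool) (hv : v ∈ {v | col g v = e}) :
    ({v | col g v = e} ∩ (cubeGraph d).neighborSet v).ncard ≤ k := by
  set T : Finset (Fin d) := Finset.univ.filter
    (fun i => ¬ (hasBlock g (Function.update v i (!(v i))) ↔ hasBlock g v)) with hT
  have hsub : ({v | col g v = e} ∩ (cubeGraph d).neighborSet v) ⊆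
      ((T.image (fun i => Function.update v i (!(v i))) : Finset _) : Set (Fin d → Bool)) := by
    rintro w ⟨hw, hadj⟩
    obtain ⟨i, rfl⟩ := aux_adj hadj
    simp only [Finset.coe_image, Set.mem_image, Finset.mem_coe]
    refine ⟨i, ?_, rfl⟩
    rw [hT, Finset.mem_filter]
    refine ⟨Finset.mem_univ _, col_flip g v i ?_⟩
    exact hw.trans hv.symm
  refine (Set.ncard_le_ncard hsub (Finset.finite_toSet _)).trans ?_
  rw [Set.ncard_coe_finset]
  refine Finset.card_image_le.trans ?_
  by_cases hp : hasBlock g v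
  · obtain ⟨j, hj⟩ := id hp
    refine le_trans (Finset.card_le_card ?_) (hf j)
    intro i hi
    rw [hT, Finset.mem_filter] at hi
    rw [Finset.mem_filter]
    refine ⟨Finset.mem_univ _, ?_⟩
    by_contra hne
    apply hi.2
    refine iff_of_true ⟨j, ?_⟩ hp
    intro x hx
    rw [Function.update_of_ne]
    · exact hj x hx
    · rintro rfl
      exact hne hx
  · have key : ∀ i ∈ T, v i = false ∧ ∀ x, g x = g i → x ≠ i → v x = true := by
      intro i hi
      rw [hT, Finset.mem_filter] at hi
      have h2 : hasBlock g (Function.update v i (!(v i))) := by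
        by_contra h3
        exact hi.2 (iff_of_false h3 hp)
      obtain ⟨j, hj⟩ := h2
      have hji : g i = j := by
        by_contra hne
        apply hp
        refine ⟨j, fun x hx => ?_⟩
        have := hj x hx
        rwa [Function.update_of_ne] at this
        rintro rfl
        exact hne hx
      constructor
      · have := hj i hji
        simpa using this
      · intro x hx hxi
        have := hj x (hx.trans hji)
        rwa [Function.update_of_ne hxi] at this
    have := Finset.card_le_card_of_injOn (s := T) (t := (Finset.univ : Finset (Fin k))) g
      (fun _ _ => Finset.mem_univ _) (by
        intro a ha b hb hab
        by_contra hne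
        have h1 := (key a ha).1
        have h2 := (key b hb).2 a hab hne
        rw [h1] at h2
        exact absurd h2 (by simp))
    simpa using this

open Classical in
theorem sum_prod_bool {d : ℕ} (f : Fin d → Bool → ℤ) :
    ∑ v : Fin d → Bool, ∏ i, f i (v i) = ∏ i, (f i true + f i false) := by
  have := Finset.prod_univ_sum (fun _ : Fin d => (Finset.univ : Finset Bool)) f
  simp only [Fintype.piFinset_univ, Fintype.sum_bool] at this
  exact this.symm

open Classical in
theorem noBlock_expand {d k : ℕ} (g : Fin d → Fin k) (v : Fin d → Bool) :
    (if hasBlock g v then (0 : ℤ) else 1) =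
      ∑ J : Finset (Fin k), (-1) ^ J.card * ∏ i, (if g i ∈ J then (if v i then 1 else 0) else 1) := by
  have h1 : (if hasBlock g v then (0 : ℤ) else 1) =
      ∏ j, (1 - (if ∀ i, g i = j → v i = true then (1 : ℤ) else 0)) := by
    split_ifs with h
    · obtain ⟨j, hj⟩ := h
      symm
      apply Finset.prod_eq_zero (Finset.mem_univ j)
      rw [if_pos hj]; simp
    · symm
      apply Finset.prod_eq_one
      intro j _
      rw [if_neg (fun hj => h ⟨j, hj⟩)]; simp
  rw [h1]
  simp_rw [sub_eq_add_neg]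
  rw [Finset.prod_one_add, Finset.powerset_univ]
  refine Finset.sum_congr rfl fun J _ => ?_
  rw [Finset.prod_neg]
  congr 1
  by_cases h : ∀ i, g i ∈ J → v i = true
  · rw [Finset.prod_eq_one, Finset.prod_eq_one]
    · intro i _
      split_ifs with h1 h2
      · rfl
      · exact absurd (h i h1) h2
      · rfl
    · intro j hj
      rw [if_pos]
      rintro i rfl
      exact h i hj
  · push Not at h
    obtain ⟨i, hi, hvi⟩ := h
    rw [Finset.prod_eq_zero hi, Finset.prod_eq_zero (Finset.mem_univ i)]
    · simp [hi, hvi]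
    · rw [if_neg]
      intro h
      exact hvi (h i rfl)

open Classical in
theorem sum_col {d k : ℕ} (hd : 1 ≤ d) (g : Fin d → Fin k) (hg : Function.Surjective g) :
    ∑ v, col g v = 2 * ((-1) ^ k * (-1) ^ d) := by
  have h0 : ∑ v : Fin d → Bool, chi v = 0 := by
    unfold chi
    rw [sum_prod_bool (fun _ b => if b then (-1 : ℤ) else 1)]
    apply Finset.prod_eq_zero (Finset.mem_univ (⟨0, hd⟩ : Fin d))
    simp
  have h1 : ∀ v, col g v = 2 * (chi v * (if hasBlock g v then (0 : ℤ) else 1)) - chi v := by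
    intro v
    unfold col
    split_ifs <;> ring
  simp_rw [h1]
  rw [Finset.sum_sub_distrib, h0, ← Finset.mul_sum, sub_zero]
  congr 1
  simp_rw [noBlock_expand, Finset.mul_sum]
  rw [Finset.sum_comm]
  have h2 : ∀ J : Finset (Fin k), ∑ v : Fin d → Bool, chi v * ((-1) ^ J.card *
      ∏ i, (if g i ∈ J then (if v i then 1 else 0) else 1)) =
      (-1) ^ J.card * ∏ i, (if g i ∈ J then (-1 : ℤ) else 0) := by
    intro J
    have := sum_prod_bool (fun i b => (if b then (-1 : ℤ) else 1) *
      (if g i ∈ J then (if b then (1 : ℤ) else 0) else 1))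
    have h3 : ∏ i, (if g i ∈ J then (-1 : ℤ) else 0) =
        ∑ v : Fin d → Bool, chi v * ∏ i, (if g i ∈ J then (if v i then 1 else 0) else 1) := by
      unfold chi
      simp_rw [← Finset.prod_mul_distrib]
      rw [this]
      refine Finset.prod_congr rfl fun i _ => ?_
      split_ifs <;> simp_all
    rw [h3, Finset.mul_sum]
    refine Finset.sum_congr rfl fun v _ => ?_
    ring
  simp_rw [h2]
  rw [Finset.sum_eq_single Finset.univ]
  · simp
  · intro J _ hJ
    obtain ⟨j, hj⟩ : ∃ j, j ∉ J := by
      by_contra hh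
      push Not at hh
      exact hJ (Finset.eq_univ_iff_forall.mpr hh)
    obtain ⟨i, rfl⟩ := hg j
    rw [Finset.prod_eq_zero (Finset.mem_univ i), mul_zero]
    simp [hj]
  · simp

theorem exists_blocks (d : ℕ) (hd : 1 ≤ d) (k : ℕ) (hk : 1 ≤ k) (hkd : k ≤ d) (hdk : d ≤ k * k) :
    ∃ g : Fin d → Fin k, Function.Surjective g ∧
      ∀ j, (Finset.univ.filter (fun i => g i = j)).card ≤ k := by
  refine ⟨fun i => ⟨i.1 % k, Nat.mod_lt _ hk⟩, ?_, ?_⟩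
  · intro j
    refine ⟨⟨j.1, by omega⟩, ?_⟩
    ext
    simp [Nat.mod_eq_of_lt j.2]
  · intro j
    have := Finset.card_le_card_of_injOn
      (s := Finset.univ.filter (fun i : Fin d => (⟨i.1 % k, Nat.mod_lt _ hk⟩ : Fin k) = j))
      (t := Finset.range k) (fun i => i.1 / k)
      (by
        intro i _
        simp only [Finset.coe_range, Set.mem_Iio]
        exact Nat.div_lt_of_lt_mul (lt_of_lt_of_le i.2 hdk))
      (by
        intro a ha b hb hab
        simp only [Finset.coe_filter, Finset.mem_univ, true_and, Set.mem_ofPred_eq] at ha hb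
        have h1 : a.1 % k = b.1 % k := congrArg Fin.val (ha.trans hb.symm)
        simp only at hab
        ext
        rw [← Nat.div_add_mod a.1 k, ← Nat.div_add_mod b.1 k, h1, hab])
    simpa using this

/-- For `d ≥ 1`, `{0,1}^d` can be partitioned into `A ⊔ B` such that both parts induce
subgraphs of `Q_d` of maximum degree at most `⌈√d⌉` and `|A| − |B| ≥ 2`.  In particular
`Q_d` has an induced subgraph on `2^{d−1} + 1` vertices of maximum degree at most
`⌈√d⌉`. -/
theorem stmt10 (d : ℕ) (hd : 1 ≤ d) :
    (∃ A B : Set (Fin d → Bool),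
      A ∪ B = Set.univ ∧ Disjoint A B ∧
      (∀ v ∈ A, (A ∩ (cubeGraph d).neighborSet v).ncard ≤ ⌈Real.sqrt d⌉₊) ∧
      (∀ v ∈ B, (B ∩ (cubeGraph d).neighborSet v).ncard ≤ ⌈Real.sqrt d⌉₊) ∧
      B.ncard + 2 ≤ A.ncard) ∧
    ∃ K : Set (Fin d → Bool),
      K.ncard = 2 ^ (d - 1) + 1 ∧
      ∀ v ∈ K, (K ∩ (cubeGraph d).neighborSet v).ncard ≤ ⌈Real.sqrt d⌉₊ := by
  classical
  set k := ⌈Real.sqrt d⌉₊ with hkdef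
  have hd0 : (1 : ℝ) ≤ d := by exact_mod_cast hd
  have hk : 1 ≤ k := Nat.one_le_iff_ne_zero.mpr (by
    have : 0 < k := Nat.ceil_pos.mpr (Real.sqrt_pos.mpr (by linarith))
    omega)
  have hkd : k ≤ d := Nat.ceil_le.mpr (Real.sqrt_le_iff.mpr ⟨by linarith, by nlinarith⟩)
  have hdk : d ≤ k * k := by
    have h1 : Real.sqrt d ≤ k := Nat.le_ceil _
    have h2 := (Real.sqrt_le_left (Nat.cast_nonneg k)).mp h1
    have h3 : (d : ℝ) ≤ ((k * k : ℕ) : ℝ) := by push_cast; nlinarith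
    exact_mod_cast h3
  clear_value k
  obtain ⟨g, hg, hf⟩ := exists_blocks d hd k hk hkd hdk
  have hs := sum_col hd g hg
  obtain ⟨e, he, hes⟩ : ∃ e : ℤ, (e = 1 ∨ e = -1) ∧ ∑ v, col g v = 2 * e := by
    refine ⟨_, ?_, hs⟩
    rw [← pow_add]
    exact neg_one_pow_eq_or ℤ _
  have hsum : ({v | col g v = e} : Set (Fin d → Bool)).ncard
      + ({v | col g v = -e} : Set (Fin d → Bool)).ncard = 2 ^ d ∧
      (({v | col g v = e} : Set (Fin d → Bool)).ncard : ℤ)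
      - ({v | col g v = -e} : Set (Fin d → Bool)).ncard = 2 := by
    have hn : ∀ e' : ℤ, ({v | col g v = e'} : Set (Fin d → Bool)).ncard =
        (Finset.univ.filter (fun v => col g v = e')).card := by
      intro e'
      rw [← Set.ncard_coe_finset]
      simp
    rw [hn, hn]
    have ha : (((Finset.univ.filter (fun v => col g v = e)).card : ℤ)) +
        (Finset.univ.filter (fun v => col g v = -e)).card = 2 ^ d := by
      rw [Finset.card_filter, Finset.card_filter]
      push_cast
      rw [← Finset.sum_add_distrib, Finset.sum_eq_card_nsmul (b := 1)]
      · simp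
      · intro v _
        rcases col_sq g v with h | h <;> rcases he with rfl | rfl <;> simp [h]
    have hb : (((Finset.univ.filter (fun v => col g v = e)).card : ℤ)) -
        (Finset.univ.filter (fun v => col g v = -e)).card = e * ∑ v, col g v := by
      rw [Finset.card_filter, Finset.card_filter]
      push_cast
      rw [← Finset.sum_sub_distrib, Finset.mul_sum]
      refine Finset.sum_congr rfl fun v _ => ?_
      rcases col_sq g v with h | h <;> rcases he with rfl | rfl <;> simp [h]
    refine ⟨by exact_mod_cast ha, ?_⟩
    rw [hb, hes]
    rcases he with rfl | rfl <;> norm_num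
  obtain ⟨h1, h2⟩ := hsum
  refine ⟨⟨{v | col g v = e}, {v | col g v = -e}, ?_, ?_, ?_, ?_, ?_⟩,
    {v | col g v = e}, ?_, ?_⟩
  · ext v
    simp only [Set.mem_union, Set.mem_ofPred_eq, Set.mem_univ, iff_true]
    rcases col_sq g v with h | h <;> rcases he with rfl | rfl <;> simp [h]
  · rw [Set.disjoint_left]
    intro v hv hv'
    simp only [Set.mem_ofPred_eq] at hv hv'
    omega
  · exact deg_bound g hf e
  · exact deg_bound g hf (-e)
  · omega
  · obtain ⟨m, rfl⟩ : ∃ m, d = m + 1 := ⟨d - 1, by omega⟩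
    rw [pow_succ] at h1
    simp only [Nat.add_sub_cancel]
    omega
  · exact deg_bound g hf e
end

section
/- Let Γ be a finite group and G = Cay(Γ, C) a Cayley graph that is bipartite (i.e., 2-colorable). Suppose G contains the d-dimensional hypercube Q_d as a subgraph, i.e., there is an injective map f: {0,1}^d → Γ such that whenever u, v ∈ {0,1}^d differ in exactly one coordinate, f(u) and f(v) are adjacent in G. Then for every K ⊆ Γ with 2·|K| > |Γ|, the subgraph of G induced by K has maximum degree at least √d. -/
namespace HuangAux

/-- flip the `i`-th coordinate -/
def flip {d : ℕ} (i : Fin d) (u : Fin d → Bool) : Fin d → Bool :=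
  Function.update u i (!(u i))

/-- sign of the edge from `u` in direction `i` -/
noncomputable def sg {d : ℕ} (u : Fin d → Bool) (i : Fin d) : ℝ :=
  ∏ j : Fin d, if j < i ∧ u j = true then -1 else 1

/-- parity sign -/
noncomputable def par {d : ℕ} (u : Fin d → Bool) : ℝ :=
  ∏ j : Fin d, if u j = true then -1 else 1

lemma flip_same {d : ℕ} (i : Fin d) (u : Fin d → Bool) : flip i u i = !(u i) := by
  simp [flip]

lemma flip_ne {d : ℕ} {i j : Fin d} (h : j ≠ i) (u : Fin d → Bool) : flip i u j = u j := by
  simp [flip, h]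

lemma flip_flip {d : ℕ} (i : Fin d) (u : Fin d → Bool) : flip i (flip i u) = u := by
  ext j
  by_cases h : j = i
  · subst h; simp [flip_same]
  · simp [flip_ne h]

lemma flip_comm {d : ℕ} (i j : Fin d) (u : Fin d → Bool) :
    flip i (flip j u) = flip j (flip i u) := by
  ext k
  by_cases h : k = i <;> by_cases h' : k = j
  · subst h; subst h'; rfl
  · subst h; simp [flip_same, flip_ne h']
  · subst h'; simp [flip_same, flip_ne h]
  · simp [flip_ne h, flip_ne h']

lemma sg_flip_le {d : ℕ} {i j : Fin d} (h : j ≤ i) (u : Fin d → Bool) :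
    sg (flip i u) j = sg u j := by
  unfold sg
  refine Finset.prod_congr rfl fun k _ => ?_
  by_cases hk : k = i
  · subst hk; simp [not_lt.mpr h]
  · rw [flip_ne hk]

lemma sg_flip_lt {d : ℕ} {i j : Fin d} (h : i < j) (u : Fin d → Bool) :
    sg (flip i u) j = - sg u j := by
  unfold sg
  rw [← Finset.mul_prod_erase _ _ (Finset.mem_univ i),
    ← Finset.mul_prod_erase (a := i) Finset.univ (fun k => if k < j ∧ u k = true then (-1:ℝ) else 1)
      (Finset.mem_univ i), ← neg_mul]
  congr 1
  · rw [flip_same]; cases u i <;> simp [h]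
  · refine Finset.prod_congr rfl fun k hk => ?_
    rw [flip_ne (Finset.ne_of_mem_erase hk)]

lemma par_flip {d : ℕ} (i : Fin d) (u : Fin d → Bool) :
    par (flip i u) = - par u := by
  unfold par
  rw [← Finset.mul_prod_erase _ _ (Finset.mem_univ i),
    ← Finset.mul_prod_erase (a := i) Finset.univ (fun k => if u k = true then (-1:ℝ) else 1)
      (Finset.mem_univ i), ← neg_mul]
  congr 1
  · rw [flip_same]; cases u i <;> simp
  · refine Finset.prod_congr rfl fun k hk => ?_
    rw [flip_ne (Finset.ne_of_mem_erase hk)]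

lemma par_ne {d : ℕ} (u : Fin d → Bool) : par u ≠ 0 := by
  unfold par
  refine Finset.prod_ne_zero_iff.mpr fun k _ => ?_
  split_ifs <;> norm_num

lemma abs_sg {d : ℕ} (u : Fin d → Bool) (i : Fin d) : |sg u i| = 1 := by
  unfold sg
  rw [Finset.abs_prod]
  refine Finset.prod_eq_one fun k _ => ?_
  split_ifs <;> norm_num

lemma sg_sq {d : ℕ} (u : Fin d → Bool) (i : Fin d) : sg u i * sg u i = 1 := by
  rw [← abs_mul_abs_self, abs_sg, one_mul]

/-- Huang's signed adjacency operator -/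
noncomputable def A (d : ℕ) : ((Fin d → Bool) → ℝ) →ₗ[ℝ] ((Fin d → Bool) → ℝ) where
  toFun φ u := ∑ i, sg u i * φ (flip i u)
  map_add' φ ψ := by
    ext u; simp [mul_add, Finset.sum_add_distrib]
  map_smul' c φ := by
    ext u; simp only [Pi.smul_apply, smul_eq_mul, RingHom.id_apply, Finset.mul_sum]
    exact Finset.sum_congr rfl fun _ _ => by ring

lemma A_apply {d : ℕ} (φ : (Fin d → Bool) → ℝ) (u : Fin d → Bool) :
    A d φ u = ∑ i, sg u i * φ (flip i u) := rfl

lemma anti {d : ℕ} {i j : Fin d} (h : i ≠ j) (u : Fin d → Bool) :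
    sg u i * sg (flip i u) j = - (sg u j * sg (flip j u) i) := by
  rcases lt_or_gt_of_ne h with h | h
  · rw [sg_flip_lt h, sg_flip_le h.le]; ring
  · rw [sg_flip_lt h, sg_flip_le h.le]; ring

lemma A_sq {d : ℕ} (φ : (Fin d → Bool) → ℝ) : A d (A d φ) = (d : ℝ) • φ := by
  ext u
  simp only [A_apply, Pi.smul_apply, smul_eq_mul, Finset.mul_sum]
  have key : ∀ i j : Fin d,
      sg u i * (sg (flip i u) j * φ (flip j (flip i u))) +
      sg u j * (sg (flip j u) i * φ (flip i (flip j u))) = if i = j then 2 * φ u else 0 := by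
    intro i j
    split_ifs with h
    · subst h
      rw [sg_flip_le le_rfl, flip_flip, ← mul_assoc, sg_sq]; ring
    · rw [flip_comm j i, ← mul_assoc, anti h]; ring
  have h2 : (∑ i : Fin d, ∑ j : Fin d, sg u i * (sg (flip i u) j * φ (flip j (flip i u)))) +
      (∑ i : Fin d, ∑ j : Fin d, sg u i * (sg (flip i u) j * φ (flip j (flip i u))))
      = 2 * (d * φ u) := by
    have hc := Finset.sum_comm (s := Finset.univ) (t := Finset.univ)
      (f := fun i j : Fin d => sg u i * (sg (flip i u) j * φ (flip j (flip i u))))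
    nth_rewrite 2 [hc]
    simp_rw [← Finset.sum_add_distrib, key]
    simp; ring
  linarith

/-- multiplication by the parity -/
noncomputable def D (d : ℕ) : ((Fin d → Bool) → ℝ) →ₗ[ℝ] ((Fin d → Bool) → ℝ) where
  toFun φ u := par u * φ u
  map_add' φ ψ := by ext u; simp [mul_add]
  map_smul' c φ := by ext u; simp; ring

lemma D_inj (d : ℕ) : Function.Injective (D d) := by
  intro φ ψ h
  ext u
  exact mul_left_cancel₀ (par_ne u) (congrFun h u)

lemma A_D {d : ℕ} (φ : (Fin d → Bool) → ℝ) : A d (D d φ) = - D d (A d φ) := by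
  ext u
  simp only [A_apply, D, LinearMap.coe_mk, AddHom.coe_mk, Pi.neg_apply, Finset.mul_sum, par_flip]
  rw [← Finset.sum_neg_distrib]
  exact Finset.sum_congr rfl fun _ _ => by ring

/-- the negative eigenspace -/
noncomputable def E (d : ℕ) : Submodule ℝ ((Fin d → Bool) → ℝ) :=
  LinearMap.ker (A d + Real.sqrt d • LinearMap.id)

lemma mem_E {d : ℕ} {φ : (Fin d → Bool) → ℝ} : φ ∈ E d ↔ A d φ = - (Real.sqrt d • φ) := by
  simp [E, add_eq_zero_iff_eq_neg]

lemma finrank_E {d : ℕ} (hd : 0 < d) : 2 * Module.finrank ℝ (E d) ≤ 2 ^ d := by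
  have h1 : Module.finrank ℝ ((E d).map (D d)) = Module.finrank ℝ (E d) :=
    (LinearEquiv.finrank_eq ((E d).equivMapOfInjective (D d) (D_inj d))).symm
  have hdis : Disjoint (E d) ((E d).map (D d)) := by
    rw [Submodule.disjoint_def]
    rintro _ hx ⟨φ, hφ, rfl⟩
    have hφ' := mem_E.mp hφ
    have hx' := mem_E.mp hx
    rw [A_D, hφ', map_neg, map_smul, neg_neg] at hx'
    have h0 : Real.sqrt d ≠ 0 := by positivity
    have := self_eq_neg.mp hx'
    exact (smul_eq_zero.mp this).resolve_left h0
  have := Submodule.finrank_add_finrank_le_of_disjoint hdis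
  rw [h1] at this
  simp at this
  omega

theorem huang {d : ℕ} (hd : 0 < d) (K : Set (Fin d → Bool)) (hK : 2 ^ d < 2 * K.ncard) :
    ∃ u ∈ K, Real.sqrt d ≤ ({i : Fin d | flip i u ∈ K}.ncard : ℝ) := by
  classical
  let ext0 : (K → ℝ) →ₗ[ℝ] ((Fin d → Bool) → ℝ) :=
    { toFun := fun ψ u => if h : u ∈ K then ψ ⟨u, h⟩ else 0
      map_add' := by
        intro a b; ext u; by_cases h : u ∈ K <;> simp [h]
      map_smul' := by
        intro a b; ext u; by_cases h : u ∈ K <;> simp [h] }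
  have hmem : ∀ ψ : K → ℝ, ((A d - Real.sqrt d • LinearMap.id) ∘ₗ ext0) ψ ∈ E d := by
    intro ψ
    rw [mem_E]
    simp only [LinearMap.comp_apply, LinearMap.sub_apply, LinearMap.smul_apply, LinearMap.id_apply,
      map_sub, map_smul, A_sq, smul_sub, smul_smul]
    rw [Real.mul_self_sqrt (Nat.cast_nonneg d)]
    abel
  let T := LinearMap.codRestrict (E d) _ hmem
  have hker : LinearMap.ker T ≠ ⊥ := by
    apply LinearMap.ker_ne_bot_of_finrank_lt
    have h1 := finrank_E hd
    have h2 : Module.finrank ℝ (K → ℝ) = K.ncard := by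
      rw [Module.finrank_fintype_fun_eq_card, Set.ncard_eq_toFinset_card', Set.toFinset_card]
    omega
  obtain ⟨ψ, hψ, hne⟩ := Submodule.exists_mem_ne_zero_of_ne_bot hker
  have hT : ((A d - Real.sqrt d • LinearMap.id) ∘ₗ ext0) ψ = 0 := by
    have := congrArg Subtype.val (LinearMap.mem_ker.mp hψ)
    simpa [T] using this
  have hA : A d (ext0 ψ) = Real.sqrt d • ext0 ψ := by
    simpa [sub_eq_zero] using hT
  set φ := ext0 ψ with hφ
  have hout : ∀ u, u ∉ K → φ u = 0 := fun u hu => by simp [hφ, ext0, hu]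
  obtain ⟨k, hk⟩ := Function.ne_iff.mp hne
  have hφk : φ k ≠ 0 := by simpa [hφ, ext0] using hk
  obtain ⟨u, -, hu⟩ := Finset.exists_max_image Finset.univ (fun u => |φ u|) ⟨k.1, Finset.mem_univ _⟩
  have hpos : 0 < |φ u| := lt_of_lt_of_le (abs_pos.mpr hφk) (hu _ (Finset.mem_univ _))
  have huK : u ∈ K := by
    by_contra h
    simp [hout u h] at hpos
  refine ⟨u, huK, ?_⟩
  have h1 := congrFun hA u
  rw [A_apply, Pi.smul_apply, smul_eq_mul] at h1
  have h2 : Real.sqrt d * |φ u| ≤ ({i : Fin d | flip i u ∈ K}.ncard : ℝ) * |φ u| := by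
    calc Real.sqrt d * |φ u| = |Real.sqrt d * φ u| := by
          rw [abs_mul, abs_of_nonneg (Real.sqrt_nonneg _)]
      _ = |∑ i, sg u i * φ (flip i u)| := by rw [h1]
      _ ≤ ∑ i, |sg u i * φ (flip i u)| := Finset.abs_sum_le_sum_abs _ _
      _ ≤ ∑ i, if flip i u ∈ K then |φ u| else 0 := by
          refine Finset.sum_le_sum fun i _ => ?_
          rw [abs_mul, abs_sg, one_mul]
          split_ifs with h
          · exact hu _ (Finset.mem_univ _)
          · simp [hout _ h]
      _ = _ := by
          rw [← Finset.sum_filter, Finset.sum_const, nsmul_eq_mul, Set.ncard_eq_toFinset_card']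
          simp
  exact le_of_mul_le_mul_right h2 hpos

lemma hammingDist_flip {d : ℕ} (i : Fin d) (u : Fin d → Bool) :
    hammingDist u (flip i u) = 1 := by
  unfold hammingDist
  rw [Finset.card_eq_one]
  refine ⟨i, ?_⟩
  ext j
  by_cases h : j = i
  · subst h; simp [flip_same]
  · simp [flip_ne h, h]

end HuangAux


/-- Huang's lower bound for bipartite Cayley graphs containing a `d`-cube: if the
bipartite Cayley graph `G = Cay(Γ, C)` contains the hypercube `Q_d` as a subgraph,
then every vertex set `K` with `2|K| > |Γ|` induces a subgraph with maximum degree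
at least `√d`. -/
theorem stmt12 {Γ : Type*} [Group Γ] [Fintype Γ] (C : Set Γ)
    (hsym : ∀ c ∈ C, c⁻¹ ∈ C) (h1 : (1 : Γ) ∉ C)
    (G : SimpleGraph Γ) (hG : G = SimpleGraph.fromRel (fun x y => x⁻¹ * y ∈ C))
    (hbip : G.Colorable 2) (d : ℕ)
    (f : (Fin d → Bool) → Γ) (hinj : Function.Injective f)
    (hcube : ∀ u v : Fin d → Bool, hammingDist u v = 1 → G.Adj (f u) (f v)) :
    ∀ K : Set Γ, 2 * K.ncard > Fintype.card Γ →
      ∃ x ∈ K, Real.sqrt d ≤ ((K ∩ G.neighborSet x).ncard : ℝ) := by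
  classical
  intro K hK
  have hinv : ∀ g x y : Γ, G.Adj x y → G.Adj (g * x) (g * y) := by
    intro g x y h
    subst hG
    simp only [SimpleGraph.fromRel_adj] at h ⊢
    refine ⟨fun e => h.1 (mul_left_cancel e), ?_⟩
    simpa [mul_assoc] using h.2
  rcases Nat.eq_zero_or_pos d with hd | hd
  · subst hd
    have : K.Nonempty := by
      rw [Set.nonempty_iff_ne_empty]
      rintro rfl
      simp at hK
    obtain ⟨x, hx⟩ := this
    exact ⟨x, hx, by simp⟩
  obtain ⟨g, hg⟩ : ∃ g : Γ, 2 ^ d < 2 * {u : Fin d → Bool | g * f u ∈ K}.ncard := by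
    by_contra hcon
    push Not at hcon
    have hs : ∑ g : Γ, {u : Fin d → Bool | g * f u ∈ K}.ncard = 2 ^ d * K.ncard := by
      have e1 : ∀ g : Γ, {u : Fin d → Bool | g * f u ∈ K}.ncard =
          ∑ u : Fin d → Bool, if g * f u ∈ K then 1 else 0 := by
        intro g
        rw [Set.ncard_eq_toFinset_card', ← Finset.sum_filter, Finset.sum_const]
        simp
      simp_rw [e1]
      rw [Finset.sum_comm]
      have e2 : ∀ u : Fin d → Bool, (∑ g : Γ, if g * f u ∈ K then 1 else 0) = K.ncard := by
        intro u
        have e3 := Equiv.sum_comp (Equiv.mulRight (f u)) (fun x => if x ∈ K then (1 : ℕ) else 0)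
        simp only [Equiv.coe_mulRight] at e3
        refine Eq.trans e3 ?_
        rw [Set.ncard_eq_toFinset_card', ← Finset.sum_filter, Finset.sum_const]
        simp
      simp_rw [e2]
      simp
    have hle : ∑ g : Γ, 2 * {u : Fin d → Bool | g * f u ∈ K}.ncard ≤ ∑ g : Γ, 2 ^ d :=
      Finset.sum_le_sum fun g _ => hcon g
    rw [← Finset.mul_sum, hs] at hle
    simp only [Finset.sum_const, Finset.card_univ, smul_eq_mul] at hle
    have hp : 0 < 2 ^ d := by positivity
    nlinarith
  obtain ⟨u, hu, hdeg⟩ := HuangAux.huang hd _ hg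
  refine ⟨g * f u, hu, hdeg.trans ?_⟩
  norm_cast
  refine Set.ncard_le_ncard_of_injOn (fun i => g * f (HuangAux.flip i u)) ?_ ?_ (Set.toFinite _)
  · intro i hi
    exact ⟨hi, hinv _ _ _ (hcube _ _ (HuangAux.hammingDist_flip i u))⟩
  · intro i _ j _ hij
    have := congrFun (hinj (mul_left_cancel hij)) i
    by_contra hne
    rw [HuangAux.flip_same, HuangAux.flip_ne hne] at this
    simp at this
end

section
/- Let i and j be even integers with i ≥ 4 and j ≥ 4. Then the Cartesian product C_i □ C_j of the cycles on i and on j vertices has a set S of vertices with 2·|S| > i·j such that the subgraph induced by S has maximum degree at most 2. -/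
/-- The position class of a coordinate: the first two are special, then period two. -/
def cls (x : ℕ) : Fin 4 :=
  if x = 0 then 0 else if x = 1 then 1 else if x % 2 = 0 then 2 else 3

/-- The base pattern on `C_4 □ C_4`. -/
def pat (a b : Fin 4) : Bool :=
  (![![true, true, false, true], ![false, true, false, true],
    ![true, true, false, true], ![false, false, true, false]] a) b

/-- Allowed classes of (previous, current, next) coordinates. -/
def trip (l c r : Fin 4) : Bool :=
  (c = 0 ∧ l = 3 ∧ r = 1) ∨ (c = 1 ∧ l = 0 ∧ r = 2) ∨
    (c = 2 ∧ (l = 1 ∨ l = 3) ∧ r = 3) ∨ (c = 3 ∧ l = 2 ∧ (r = 0 ∨ r = 2))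

lemma pat_deg : ∀ c l r : Fin 4, trip l c r = true → ∀ c' l' r' : Fin 4, trip l' c' r' = true →
    pat c c' = true →
    (pat r c').toNat + (pat l c').toNat + (pat c r').toNat + (pat c l').toNat ≤ 2 := by
  decide

lemma trip_fin (m : ℕ) (x : Fin (2 * m + 4)) :
    trip (cls (x - 1 : Fin (2 * m + 4)).val) (cls x.val) (cls (x + 1 : Fin (2 * m + 4)).val)
      = true := by
  have h1 : (x + 1 : Fin (2 * m + 4)).val = if x.val = 2 * m + 3 then 0 else x.val + 1 := by
    rw [Fin.val_add_one]
    simp [Fin.ext_iff]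
  have h2 : (x - 1 : Fin (2 * m + 4)).val = if x.val = 0 then 2 * m + 3 else x.val - 1 := by
    by_cases h : x = 0
    · subst h; simp
    · rw [Fin.val_sub_one_of_ne_zero h]
      have : x.val ≠ 0 := fun h' => h (Fin.ext (by simpa using h'))
      simp [this]
  rw [h1, h2]
  have hx := x.isLt
  generalize x.val = y at *
  by_cases y0 : y = 0
  · subst y0
    have : (2 * m + 3) % 2 = 1 := by omega
    simp [cls, trip, this]
  by_cases y1 : y = 1
  · subst y1
    have : (1 : ℕ) ≠ 2 * m + 3 := by omega
    simp [cls, trip, this]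
  by_cases y2 : y = 2
  · subst y2
    have : (2 : ℕ) ≠ 2 * m + 3 := by omega
    simp [cls, trip, this]
  have a1 : y - 1 ≠ 0 := by omega
  have a2 : y - 1 ≠ 1 := by omega
  rcases Nat.mod_two_eq_zero_or_one y with h | h
  · have a3 : y ≠ 2 * m + 3 := by omega
    have a4 : (y - 1) % 2 = 1 := by omega
    have a5 : (y + 1) % 2 = 1 := by omega
    simp [cls, trip, y0, y1, a1, a2, a3, a4, a5, h]
  · have a4 : (y - 1) % 2 = 0 := by omega
    have a5 : (y + 1) % 2 = 0 := by omega
    by_cases a3 : y = 2 * m + 3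
    · have a6 : (2 * m + 3) % 2 = 1 := by omega
      have a7 : (2 * m + 2) % 2 = 0 := by omega
      simp [cls, trip, a3, a6, a7]
    · simp [cls, trip, y0, y1, a1, a2, a3, a4, a5, h]

lemma sum_cls (h : Fin 4 → ℕ) (m : ℕ) :
    ∑ x : Fin (2 * m + 4), h (cls x.val) = h 0 + h 1 + (m + 1) * (h 2 + h 3) := by
  rw [Fin.sum_univ_eq_sum_range (fun x => h (cls x))]
  induction m with
  | zero => simp [Finset.sum_range_succ, cls]; ring
  | succ k ih =>
    rw [show 2 * (k + 1) + 4 = (2 * k + 4) + 1 + 1 by ring, Finset.sum_range_succ,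
      Finset.sum_range_succ, ih]
    have e1 : cls (2 * k + 4) = 2 := by
      have : (2 * k + 4) % 2 = 0 := by omega
      simp [cls, this]
    have e2 : cls (2 * k + 4 + 1) = 3 := by
      have : (2 * k + 4 + 1) % 2 = 1 := by omega
      simp [cls, this]
    rw [e1, e2]; ring

lemma card_four {α : Type*} [DecidableEq α] (p : α → Bool) (a b c d : α) :
    ((({a, b, c, d} : Finset α).filter (fun v => p v = true))).card ≤
      (p a).toNat + (p b).toNat + (p c).toNat + (p d).toNat := by
  have key : ∀ (s : Finset α) (z : α), ((insert z s).filter (fun v => p v = true)).card ≤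
      (p z).toNat + (s.filter (fun v => p v = true)).card := by
    intro s z
    rw [Finset.filter_insert]
    split_ifs with h
    · rw [h]
      have := Finset.card_insert_le z (s.filter (fun v => p v = true))
      simp; omega
    · omega
  have k1 := key {b, c, d} a
  have k2 := key {c, d} b
  have k3 := key {d} c
  have k4 := key ∅ d
  simp only [insert_empty_eq, Finset.filter_empty, Finset.card_empty] at k4
  omega

/-- For even `i, j ≥ 4`, the Cartesian product `C_i □ C_j` of cycles has a set of more
than half the vertices inducing a subgraph of maximum degree at most `2`. -/
theorem stmt13 (i j : ℕ) (hi : 4 ≤ i) (hj : 4 ≤ j) (hie : Even i) (hje : Even j) :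
    ∃ S : Set (Fin i × Fin j),
      2 * S.ncard > i * j ∧
      ∀ v ∈ S,
        (S ∩ ((SimpleGraph.cycleGraph i).boxProd (SimpleGraph.cycleGraph j)).neighborSet v).ncard
          ≤ 2 := by
  obtain ⟨m, rfl⟩ : ∃ m, i = 2 * m + 4 := by
    obtain ⟨k, rfl⟩ := hie
    exact ⟨k - 2, by omega⟩
  obtain ⟨n, rfl⟩ : ∃ n, j = 2 * n + 4 := by
    obtain ⟨k, rfl⟩ := hje
    exact ⟨k - 2, by omega⟩
  let p : Fin (2 * m + 4) × Fin (2 * n + 4) → Bool := fun v => pat (cls v.1.val) (cls v.2.val)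
  refine ⟨{v | p v = true}, ?_, ?_⟩
  · have h : ({v | p v = true} : Set (Fin (2 * m + 4) × Fin (2 * n + 4))).ncard
        = ∑ x : Fin (2 * m + 4), ∑ y : Fin (2 * n + 4),
          (pat (cls x.val) (cls y.val)).toNat := by
      rw [Set.ncard_eq_toFinset_card', Set.toFinset_setOf, Finset.card_filter,
        Fintype.sum_prod_type]
      refine Finset.sum_congr rfl fun x _ => Finset.sum_congr rfl fun y _ => ?_
      show (if pat (cls x.val) (cls y.val) = true then 1 else 0) = _
      cases pat (cls x.val) (cls y.val) <;> rfl
    rw [h]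
    simp_rw [fun x : Fin (2 * m + 4) => sum_cls (fun c => (pat (cls x.val) c).toNat) n]
    rw [sum_cls (fun d => (pat d 0).toNat + (pat d 1).toNat +
      (n + 1) * ((pat d 2).toNat + (pat d 3).toNat)) m]
    simp [pat]
    nlinarith
  · rintro ⟨x, y⟩ hv
    have hv' : pat (cls x.val) (cls y.val) = true := hv
    have hsub : ({v | p v = true} ∩ ((SimpleGraph.cycleGraph (2 * m + 4)).boxProd
        (SimpleGraph.cycleGraph (2 * n + 4))).neighborSet (x, y)) ⊆
        ((({(x + 1, y), (x - 1, y), (x, y + 1), (x, y - 1)} :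
          Finset (Fin (2 * m + 4) × Fin (2 * n + 4))).filter (fun v => p v = true) :
          Finset (Fin (2 * m + 4) × Fin (2 * n + 4))) : Set _) := by
      rintro ⟨a, b⟩ ⟨h1, h2⟩
      have h1' : p (a, b) = true := h1
      rw [SimpleGraph.mem_neighborSet, SimpleGraph.boxProd_adj] at h2
      simp only [Finset.coe_filter, Finset.mem_insert, Finset.mem_singleton, Set.mem_setOf_eq,
        Prod.mk.injEq]
      refine ⟨?_, h1'⟩
      rcases h2 with ⟨h, rfl⟩ | ⟨h, rfl⟩
      · rcases (SimpleGraph.cycleGraph_adj (n := 2 * m + 2)).1 h with h | h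
        · right; left; exact ⟨by rw [← h]; exact (sub_sub_cancel x a).symm, rfl⟩
        · left; exact ⟨by rw [← h]; exact (add_sub_cancel x a).symm, rfl⟩
      · rcases (SimpleGraph.cycleGraph_adj (n := 2 * n + 2)).1 h with h | h
        · right; right; right; exact ⟨rfl, by rw [← h]; exact (sub_sub_cancel y b).symm⟩
        · right; right; left; exact ⟨rfl, by rw [← h]; exact (add_sub_cancel y b).symm⟩
    refine (Set.ncard_le_ncard hsub (Finset.finite_toSet _)).trans ?_
    rw [Set.ncard_coe_finset]
    refine (card_four p _ _ _ _).trans ?_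
    exact pat_deg _ _ _ (trip_fin m x) _ _ _ (trip_fin n y) hv'
end

section
/- Let n ≥ 1 and let G = Cay(S_{n+1}, {(1 2), (2 3), …, (n n+1)}) be the Cayley graph of the symmetric group S_{n+1} with respect to the adjacent transpositions (the Cayley graph of the Coxeter group A_n). Then there exists a set K of permutations of {1,…,n+1} with |K| ≥ (n+1)!/2 + ⌈n/2⌉! such that the subgraph of G induced by K has maximum degree at most ⌈√⌈n/2⌉⌉. -/
namespace CayA

open Equiv Finset

/-- The first point of the `i`-th pair. -/
def lo (N m : ℕ) (h : 2 * m ≤ N) (i : Fin m) : Fin N := ⟨2 * i, by omega⟩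
/-- The second point of the `i`-th pair. -/
def hi (N m : ℕ) (h : 2 * m ≤ N) (i : Fin m) : Fin N := ⟨2 * i + 1, by omega⟩

variable {N m : ℕ} (h : 2 * m ≤ N)

/-- The `i`-th pair is in increasing order. -/
def bb (π : Perm (Fin N)) (i : Fin m) : Prop := π (lo N m h i) < π (hi N m h i)

/-- The Boolean function on the cube. -/
def FF (k : ℕ) (b : Fin m → Prop) : Prop :=
  ∃ j ∈ (univ : Finset (Fin m)).image (fun i => i.val / k), ∀ i : Fin m, i.val / k = j → b i

lemma lo_ne_hi (i j : Fin m) : lo N m h i ≠ hi N m h j := by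
  simp only [lo, hi, ne_eq, Fin.mk.injEq]; omega

lemma lo_inj {i j : Fin m} : lo N m h i = lo N m h j ↔ i = j := by
  simp only [lo, Fin.mk.injEq, Fin.ext_iff]; omega

lemma hi_inj {i j : Fin m} : hi N m h i = hi N m h j ↔ i = j := by
  simp only [hi, Fin.mk.injEq, Fin.ext_iff]; omega

/-- Swapping two consecutive values changes a comparison only for the pair itself. -/
lemma swap_lt {a c x y : Fin N} (hac : a.val + 1 = c.val) (hxy : x ≠ y)
    (hne : ¬ ((x = a ∧ y = c) ∨ (x = c ∧ y = a))) :
    swap a c x < swap a c y ↔ x < y := by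
  simp only [swap_apply_def]
  split_ifs <;> simp only [Fin.lt_def, Fin.ext_iff] at * <;> omega

lemma bb_swap {a c : Fin N} (hac : a.val + 1 = c.val) (π : Perm (Fin N)) (i : Fin m)
    (hne : ¬ ((π (lo N m h i) = a ∧ π (hi N m h i) = c) ∨
      (π (lo N m h i) = c ∧ π (hi N m h i) = a))) :
    bb h (swap a c * π) i ↔ bb h π i := by
  unfold bb
  simp only [Perm.mul_apply]
  exact swap_lt hac (fun e => lo_ne_hi h i i (π.injective e)) hne

lemma bb_mul_swap {i j : Fin m} (hij : i ≠ j) (π : Perm (Fin N)) :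
    bb h (π * swap (lo N m h i) (hi N m h i)) j ↔ bb h π j := by
  unfold bb
  simp only [Perm.mul_apply]
  rw [swap_apply_of_ne_of_ne, swap_apply_of_ne_of_ne]
  · exact (lo_ne_hi h i j).symm
  · exact fun e => hij ((hi_inj h).1 e).symm
  · exact fun e => hij ((lo_inj h).1 e).symm
  · exact (lo_ne_hi h j i)

/-- Sensitivity bound on the cube. -/
lemma sens (k : ℕ) (hk : 0 < k) (hm : m ≤ k * k) (b : Fin m → Prop) (I : Finset (Fin m))
    (hI : ∀ i ∈ I, ∃ b' : Fin m → Prop, (∀ j, j ≠ i → (b' j ↔ b j)) ∧ ¬ (FF k b' ↔ FF k b)) :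
    I.card ≤ k := by
  by_cases hb : FF k b
  · obtain ⟨j, hj, hfull⟩ := hb
    have key : ∀ i ∈ I, i.val / k = j := by
      intro i hi
      obtain ⟨b', h1, h2⟩ := hI i hi
      by_contra hne
      apply h2
      refine ⟨fun _ => ⟨j, hj, hfull⟩, fun _ => ⟨j, hj, fun i' hi' => ?_⟩⟩
      rw [h1 i' (by rintro rfl; exact hne hi')]
      exact hfull i' hi'
    calc I.card ≤ (range k).card := by
          apply card_le_card_of_injOn (fun i => i.val % k)
          · intro i _
            simpa using Nat.mod_lt _ hk
          · intro x hx y hy hxy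
            have h1 := key x hx
            have h2 := key y hy
            simp only at hxy
            apply Fin.ext
            rw [← Nat.div_add_mod x.val k, ← Nat.div_add_mod y.val k, h1, h2, hxy]
      _ = k := card_range k
  · have key : ∀ i ∈ I, ¬ b i ∧ ∀ i' : Fin m, i'.val / k = i.val / k → i' ≠ i → b i' := by
      intro i hi
      obtain ⟨b', h1, h2⟩ := hI i hi
      have h3 : FF k b' := by tauto
      obtain ⟨j, hj, hfull⟩ := h3
      have hij : i.val / k = j := by
        by_contra hne
        exact hb ⟨j, hj, fun i' hi' => (h1 i' (by rintro rfl; exact hne hi')).1 (hfull i' hi')⟩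
      subst hij
      have h4 : ∀ i' : Fin m, i'.val / k = i.val / k → i' ≠ i → b i' :=
        fun i' e ne => (h1 i' ne).1 (hfull i' e)
      refine ⟨fun hbi => hb ⟨_, hj, fun i' e => ?_⟩, h4⟩
      by_cases ne : i' = i
      · rwa [ne]
      · exact h4 i' e ne
    calc I.card ≤ (range k).card := by
          apply card_le_card_of_injOn (fun i => i.val / k)
          · intro i _
            have : i.val / k < k := by
              rw [Nat.div_lt_iff_lt_mul hk]; omega
            simpa using this
          · intro x hx y hy hxy
            by_contra hne
            exact (key x hx).1 ((key y hy).2 x hxy hne)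
      _ = k := card_range k

/-- Number of sensitive neighbours. -/
lemma deg_bound (k : ℕ) (hk : 0 < k) (hm : m ≤ k * k) (π : Perm (Fin N))
    (T : Set (Perm (Fin N)))
    (hT : ∀ τ ∈ T, (∃ a c : Fin N, a.val + 1 = c.val ∧ τ = swap a c * π) ∧
      ¬ (FF k (bb h τ) ↔ FF k (bb h π))) :
    T.ncard ≤ k := by
  classical
  let φ : Fin m → Perm (Fin N) := fun i => swap (π (lo N m h i)) (π (hi N m h i)) * π
  let I : Finset (Fin m) := univ.filter (fun i => φ i ∈ T)
  have key : ∀ a c : Fin N, a.val + 1 = c.val → ∀ i : Fin m,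
      ((π (lo N m h i) = a ∧ π (hi N m h i) = c) ∨
      (π (lo N m h i) = c ∧ π (hi N m h i) = a)) → φ i = swap a c * π ∧
      ∀ j, j ≠ i → (bb h (swap a c * π) j ↔ bb h π j) := by
    intro a c hac i hi'
    refine ⟨?_, ?_⟩
    · rcases hi' with ⟨e1, e2⟩ | ⟨e1, e2⟩
      · simp only [φ, e1, e2]
      · simp only [φ, e1, e2]; rw [swap_comm]
    · intro j hj
      apply bb_swap h hac
      rintro (⟨e3, e4⟩ | ⟨e3, e4⟩) <;> rcases hi' with ⟨e1, e2⟩ | ⟨e1, e2⟩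
      · exact hj ((lo_inj h).1 (π.injective (e3.trans e1.symm)))
      · exact lo_ne_hi h _ _ (π.injective (e3.trans e2.symm))
      · exact lo_ne_hi h _ _ (π.injective (e3.trans e2.symm))
      · exact hj ((lo_inj h).1 (π.injective (e3.trans e1.symm)))
  have key2 : ∀ τ ∈ T, ∃ i, φ i = τ ∧ ∀ j, j ≠ i → (bb h τ j ↔ bb h π j) := by
    intro τ hτ
    obtain ⟨⟨a, c, hac, rfl⟩, hF⟩ := hT τ hτ
    by_contra hcon
    push Not at hcon
    apply hF
    have : bb h (swap a c * π) = bb h π := by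
      ext i
      apply bb_swap h hac
      intro hi'
      obtain ⟨h1, h2⟩ := key a c hac i hi'
      obtain ⟨j, hj, h3⟩ := hcon i h1
      have := h2 j hj
      tauto
    rw [this]
  have hφ : Function.Injective φ := by
    intro i j hij
    have h1 : swap (π (lo N m h i)) (π (hi N m h i)) = swap (π (lo N m h j)) (π (hi N m h j)) :=
      mul_right_cancel hij
    have h2 := congrArg (fun s => s (π (lo N m h i))) h1
    simp only [swap_apply_left] at h2
    by_contra hne
    rw [swap_apply_of_ne_of_ne] at h2
    · exact lo_ne_hi h _ _ (π.injective h2.symm)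
    · exact fun e => hne ((lo_inj h).1 (π.injective e))
    · exact fun e => lo_ne_hi h _ _ (π.injective e)
  have hsub : T ⊆ ((I.image φ : Finset _) : Set (Perm (Fin N))) := by
    intro τ hτ
    obtain ⟨i, h1, _⟩ := key2 τ hτ
    simp only [coe_image, Set.mem_image, mem_coe]
    exact ⟨i, by simp [I, h1, hτ], h1⟩
  calc T.ncard ≤ ((I.image φ : Finset _) : Set (Perm (Fin N))).ncard :=
        Set.ncard_le_ncard hsub (Finset.finite_toSet _)
    _ = (I.image φ).card := Set.ncard_coe_finset _
    _ ≤ I.card := card_image_le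
    _ ≤ k := by
      apply sens k hk hm (bb h π)
      intro i hi'
      have hi2 : φ i ∈ T := by simpa [I] using hi'
      obtain ⟨i', h1, h2⟩ := key2 _ hi2
      have := hφ h1
      subst this
      exact ⟨bb h (φ i'), h2, (hT _ hi2).2⟩

/-- Sign-reversing cancellation. -/
lemma sum_sign_zero (φ : Perm (Fin N) → ℤ) (σ : Perm (Fin N)) (hσ : Perm.sign σ = -1)
    (hφ : ∀ π, φ (π * σ) = φ π) : ∑ π : Perm (Fin N), (Perm.sign π : ℤ) * φ π = 0 := by
  have h1 : ∑ π : Perm (Fin N), (Perm.sign π : ℤ) * φ π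
      = ∑ π : Perm (Fin N), (Perm.sign (π * σ) : ℤ) * φ (π * σ) :=
    (Equiv.sum_comp (Equiv.mulRight σ) (fun π => (Perm.sign π : ℤ) * φ π)).symm
  have h2 : ∑ π : Perm (Fin N), (Perm.sign (π * σ) : ℤ) * φ (π * σ)
      = - ∑ π : Perm (Fin N), (Perm.sign π : ℤ) * φ π := by
    rw [← sum_neg_distrib]
    apply sum_congr rfl
    intro π _
    rw [hφ, Perm.sign_mul, hσ]; simp
  omega

/-- Pairs as a subtype. -/
def pairEquiv : Fin m × Fin 2 ≃ {x : Fin N // x.val < 2 * m} where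
  toFun p := ⟨⟨2 * p.1 + p.2, by omega⟩, by simp only; omega⟩
  invFun x := (⟨x.1.val / 2, by have := x.2; omega⟩, ⟨x.1.val % 2, by omega⟩)
  left_inv p := by
    ext <;> simp only <;> omega
  right_inv x := by
    ext; simp only; omega

/-- The permutation of points induced by a permutation of pairs. -/
def blockPerm (ρ : Perm (Fin m)) : Perm (Fin N) :=
  Perm.extendDomain (prodCongrLeft (fun _ : Fin 2 => ρ)) (pairEquiv h)

lemma sign_blockPerm (ρ : Perm (Fin m)) : Perm.sign (blockPerm h ρ) = 1 := by
  unfold blockPerm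
  rw [Perm.sign_extendDomain, Perm.sign_prodCongrLeft]
  simp [← sq]

lemma blockPerm_lo (ρ : Perm (Fin m)) (i : Fin m) :
    blockPerm h ρ (lo N m h i) = lo N m h (ρ i) :=
  Perm.extendDomain_apply_image (prodCongrLeft (fun _ : Fin 2 => ρ)) (pairEquiv h) (i, 0)

lemma blockPerm_hi (ρ : Perm (Fin m)) (i : Fin m) :
    blockPerm h ρ (hi N m h i) = hi N m h (ρ i) :=
  Perm.extendDomain_apply_image (prodCongrLeft (fun _ : Fin 2 => ρ)) (pairEquiv h) (i, 1)

lemma lo_or_hi (x : Fin N) (hx : x.val < 2 * m) :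
    (∃ i, x = lo N m h i) ∨ (∃ i, x = hi N m h i) := by
  rcases Nat.even_or_odd' x.val with ⟨c, hc | hc⟩
  · left; exact ⟨⟨c, by omega⟩, by ext; simp [lo, hc]⟩
  · right; exact ⟨⟨c, by omega⟩, by ext; simp [hi, hc]⟩

/-- The value pair `j` is the image of a position pair. -/
def good (π : Perm (Fin N)) (j : Fin m) : Prop :=
  ∃ i : Fin m, (π (lo N m h i) = lo N m h j ∧ π (hi N m h i) = hi N m h j) ∨
      (π (lo N m h i) = hi N m h j ∧ π (hi N m h i) = lo N m h j)

lemma good_swap (π : Perm (Fin N)) (j j' : Fin m) :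
    good h (swap (lo N m h j') (hi N m h j') * π) j ↔ good h π j := by
  have key : ∀ π, good h π j → good h (swap (lo N m h j') (hi N m h j') * π) j := by
    rintro π ⟨i, hi'⟩
    refine ⟨i, ?_⟩
    simp only [Perm.mul_apply]
    by_cases hjj : j = j'
    · subst hjj
      rcases hi' with ⟨e1, e2⟩ | ⟨e1, e2⟩
      · right; simp [e1, e2]
      · left; simp [e1, e2]
    · have e3 : swap (lo N m h j') (hi N m h j') (lo N m h j) = lo N m h j :=
        swap_apply_of_ne_of_ne (fun e => hjj ((lo_inj h).1 e)) (lo_ne_hi h _ _)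
      have e4 : swap (lo N m h j') (hi N m h j') (hi N m h j) = hi N m h j :=
        swap_apply_of_ne_of_ne (lo_ne_hi h _ _).symm (fun e => hjj ((hi_inj h).1 e))
      rcases hi' with ⟨e1, e2⟩ | ⟨e1, e2⟩
      · left; rw [e1, e2]; exact ⟨e3, e4⟩
      · right; rw [e1, e2]; exact ⟨e4, e3⟩
  refine ⟨fun hg => ?_, key π⟩
  have := key _ hg
  rwa [← mul_assoc, swap_mul_self, one_mul] at this

open Classical in
lemma sum_bad (hm : 0 < m) :
    ∑ π ∈ (univ : Finset (Perm (Fin N))).filter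
      (fun π => (∀ i, bb h π i) ∧ ¬ ∀ j, good h π j), (Perm.sign π : ℤ) = 0 := by
  haveI : Nonempty (Fin m) := ⟨⟨0, hm⟩⟩
  let J : Perm (Fin N) → Fin m := fun π => Classical.epsilon (fun j => ¬ good h π j)
  let S : Perm (Fin N) → Perm (Fin N) := fun π => swap (lo N m h (J π)) (hi N m h (J π)) * π
  have hgood : ∀ π j, good h (S π) j ↔ good h π j := fun π j => good_swap h π j _
  have hJ : ∀ π, J (S π) = J π := by
    intro π
    simp only [J]
    congr 1
    ext j
    rw [hgood]
  have hsgn : ∀ π, (Perm.sign (S π) : ℤ) = - (Perm.sign π : ℤ) := by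
    intro π
    simp only [S]
    rw [Perm.sign_mul, Perm.sign_swap (lo_ne_hi h _ _)]
    simp
  apply sum_involution (fun π _ => S π)
  · intro π _
    rw [hsgn]; ring
  · intro π _ hne e
    have := hsgn π
    rw [e] at this
    omega
  · intro π hπ
    simp only [mem_filter, mem_univ, true_and] at hπ ⊢
    obtain ⟨hb, hg⟩ := hπ
    refine ⟨fun i => ?_, by simpa only [hgood] using hg⟩
    have hbad : ¬ good h π (J π) := by
      push Not at hg
      exact Classical.epsilon_spec hg
    refine (bb_swap h (by simp [lo, hi]) π i ?_).2 (hb i)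
    exact fun hh => hbad ⟨i, hh⟩
  · intro π _
    change swap (lo N m h (J (S π))) (hi N m h (J (S π))) * S π = π
    rw [hJ]
    simp only [S]
    rw [← mul_assoc, swap_mul_self, one_mul]

lemma blockPerm_of_good (hN : N ≤ 2 * m + 1) (π : Perm (Fin N)) (hb : ∀ i, bb h π i)
    (hg : ∀ j, good h π j) : ∃ ρ : Perm (Fin m), blockPerm h ρ = π := by
  have hg' : ∀ j, ∃ i, π (lo N m h i) = lo N m h j ∧ π (hi N m h i) = hi N m h j := by
    intro j
    obtain ⟨i, hi' | ⟨e1, e2⟩⟩ := hg j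
    · exact ⟨i, hi'⟩
    · exfalso
      have := hb i
      unfold bb at this
      rw [e1, e2] at this
      simp [lo, hi, Fin.lt_def] at this
  choose p hp using hg'
  have hpinj : Function.Injective p := by
    intro i j hij
    have := (hp i).1
    rw [hij, (hp j).1] at this
    exact ((lo_inj h).1 this).symm
  let q : Perm (Fin m) := Equiv.ofBijective p (Finite.injective_iff_bijective.1 hpinj)
  have hlo : ∀ i, π (lo N m h i) = lo N m h (q⁻¹ i) := by
    intro i
    have := (hp (q⁻¹ i)).1
    rwa [show p (q⁻¹ i) = i from Equiv.apply_symm_apply q i] at this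
  have hhi : ∀ i, π (hi N m h i) = hi N m h (q⁻¹ i) := by
    intro i
    have := (hp (q⁻¹ i)).2
    rwa [show p (q⁻¹ i) = i from Equiv.apply_symm_apply q i] at this
  refine ⟨q⁻¹, ?_⟩
  have hsmall : ∀ x : Fin N, x.val < 2 * m → blockPerm h q⁻¹ x = π x := by
    intro x hx
    rcases lo_or_hi h x hx with ⟨i, rfl⟩ | ⟨i, rfl⟩
    · rw [blockPerm_lo, hlo]
    · rw [blockPerm_hi, hhi]
  ext1 x
  by_cases hx : x.val < 2 * m
  · exact hsmall x hx
  · have e1 : blockPerm h q⁻¹ x = x :=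
      Perm.extendDomain_apply_not_subtype _ _ hx
    rw [e1]
    by_contra hne
    have hlt : (π x).val < 2 * m := by
      have h1 : (π x).val ≠ x.val := fun e => hne (Fin.ext e.symm)
      have := (π x).isLt
      have := x.isLt
      omega
    rcases lo_or_hi h _ hlt with ⟨i, hi'⟩ | ⟨i, hi'⟩
    · have h2 := (hp i).1
      rw [← hi'] at h2
      have h3 := π.injective h2
      rw [← h3] at hx
      simp only [lo] at hx; omega
    · have h2 := (hp i).2
      rw [← hi'] at h2
      have h3 := π.injective h2
      rw [← h3] at hx
      simp only [hi] at hx; omega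

lemma blockPerm_inj : Function.Injective (blockPerm (N := N) (m := m) h) := by
  intro ρ ρ' e
  ext1 i
  have := congrArg (fun s => s (lo N m h i)) e
  simp only [blockPerm_lo] at this
  exact (lo_inj h).1 this

open Classical in
lemma sum_good (hN : N ≤ 2 * m + 1) :
    ∑ π ∈ (univ : Finset (Perm (Fin N))).filter
      (fun π => (∀ i, bb h π i) ∧ ∀ j, good h π j), (Perm.sign π : ℤ) = m.factorial := by
  have : (univ : Finset (Perm (Fin N))).filter
      (fun π => (∀ i, bb h π i) ∧ ∀ j, good h π j)
      = (univ : Finset (Perm (Fin m))).image (blockPerm h) := by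
    ext π
    simp only [mem_filter, mem_univ, true_and, mem_image]
    constructor
    · rintro ⟨hb, hg⟩
      exact blockPerm_of_good h hN π hb hg
    · rintro ⟨ρ, rfl⟩
      refine ⟨fun i => ?_, fun j => ⟨ρ⁻¹ j, Or.inl ?_⟩⟩
      · unfold bb
        rw [blockPerm_lo, blockPerm_hi]
        simp [lo, hi, Fin.lt_def]
      · rw [blockPerm_lo, blockPerm_hi]
        simp
  rw [this, sum_image (fun _ _ _ _ e => blockPerm_inj h e)]
  simp [sign_blockPerm, Fintype.card_perm]

open Classical in
/-- The 0/1 version of `bb`. -/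
noncomputable def bet (π : Perm (Fin N)) (i : Fin m) : ℤ := if bb h π i then 1 else 0

open Classical in
lemma sum_all (hm : 0 < m) (hN : N ≤ 2 * m + 1) :
    ∑ π : Perm (Fin N), (Perm.sign π : ℤ) * ∏ i : Fin m, bet h π i = m.factorial := by
  have h1 : ∀ π : Perm (Fin N), (Perm.sign π : ℤ) * ∏ i : Fin m, bet h π i =
      if (∀ i, bb h π i) then (Perm.sign π : ℤ) else 0 := by
    intro π
    simp only [bet, prod_boole, mem_univ, true_implies, mul_ite, mul_one, mul_zero]
  simp only [h1]
  rw [← sum_filter, ← sum_filter_add_sum_filter_not _ (fun π => ∀ j, good h π j),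
    filter_filter, filter_filter, sum_good h hN, sum_bad h hm, add_zero]

open Classical in
lemma signed_sum (k : ℕ) (hm : 0 < m) (hN : N ≤ 2 * m + 1) :
    |∑ π : Perm (Fin N), (Perm.sign π : ℤ) * (if FF k (bb (m := m) h π) then 0 else 1)|
      = m.factorial := by
  set B := (univ : Finset (Fin m)).image (fun i => i.val / k) with hB
  have h1 : ∀ π : Perm (Fin N), (if FF k (bb (m := m) h π) then (0 : ℤ) else 1) =
      ∑ J ∈ B.powerset, (-1) ^ J.card *
        ∏ j ∈ J, ∏ i ∈ univ.filter (fun i : Fin m => i.val / k = j), bet h π i := by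
    intro π
    have h2 : (if FF k (bb (m := m) h π) then (0 : ℤ) else 1) =
        ∏ j ∈ B, (1 + -∏ i ∈ univ.filter (fun i : Fin m => i.val / k = j), bet h π i) := by
      have h3 : ∀ j, (1 + -∏ i ∈ univ.filter (fun i : Fin m => i.val / k = j), bet h π i)
          = if ¬ (∀ i : Fin m, i.val / k = j → bb h π i) then (1 : ℤ) else 0 := by
        intro j
        simp only [bet, prod_boole, mem_filter, mem_univ, true_and]
        split_ifs <;> simp_all
      simp only [h3]
      rw [prod_boole, ← ite_not]
      congr 1
      simp only [FF, ← hB, eq_iff_iff]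
      push Not
      rfl
    rw [h2, prod_one_add]
    apply sum_congr rfl
    intro J _
    rw [prod_neg]
  simp only [h1, mul_sum]
  rw [sum_comm, sum_eq_single B]
  · have h4 : ∀ π : Perm (Fin N),
        ∏ j ∈ B, ∏ i ∈ univ.filter (fun i : Fin m => i.val / k = j), bet h π i
        = ∏ i : Fin m, bet h π i := fun π =>
      prod_fiberwise_of_maps_to (fun i _ => mem_image_of_mem _ (mem_univ i)) _
    simp only [h4, mul_left_comm _ ((-1 : ℤ) ^ _) _]
    rw [← mul_sum, sum_all h hm hN, abs_mul, abs_pow]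
    simp
  · intro J hJ hne
    simp only [mul_left_comm _ ((-1 : ℤ) ^ _) _]
    rw [← mul_sum]
    have : ∃ i : Fin m, i.val / k ∉ J := by
      by_contra hcon
      push Not at hcon
      apply hne
      refine subset_antisymm (mem_powerset.1 hJ) ?_
      intro j hj
      obtain ⟨i, _, rfl⟩ := mem_image.1 hj
      exact hcon i
    obtain ⟨i, hi'⟩ := this
    rw [sum_sign_zero _ (swap (lo N m h i) (hi N m h i)) (Perm.sign_swap (lo_ne_hi h _ _)),
      mul_zero]
    intro π
    apply prod_congr rfl
    intro j hj
    apply prod_congr rfl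
    intro i' hi2
    have hne' : i ≠ i' := by
      rintro rfl
      simp only [mem_filter, mem_univ, true_and] at hi2
      exact hi' (hi2 ▸ hj)
    simp only [bet, bb_mul_swap h hne']
  · intro hcon
    exact absurd (mem_powerset_self B) hcon

open Classical in
lemma exists_eps (hN2 : 2 ≤ N) (f : Perm (Fin N) → Prop) (M : ℕ)
    (hS : |∑ π : Perm (Fin N), (Perm.sign π : ℤ) * (if f π then 0 else 1)| = M) :
    ∃ ε : ℤˣ, N.factorial / 2 + M ≤ {π : Perm (Fin N) | Perm.sign π = ε ↔ f π}.ncard := by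
  have hcard : ∀ ε : ℤˣ, ({π : Perm (Fin N) | Perm.sign π = ε ↔ f π}.ncard : ℤ)
      = ∑ π : Perm (Fin N), if (Perm.sign π = ε ↔ f π) then (1 : ℤ) else 0 := by
    intro ε
    rw [Set.ncard_eq_toFinset_card']
    simp
  have hsig : ∑ π : Perm (Fin N), (Perm.sign π : ℤ) = 0 := by
    have := sum_sign_zero (N := N) (fun _ => 1) (swap ⟨0, by omega⟩ ⟨1, by omega⟩)
      (Perm.sign_swap (by simp)) (fun _ => rfl)
    simpa using this
  have hone : ∑ π : Perm (Fin N), (1 : ℤ) = N.factorial := by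
    simp [Fintype.card_perm]
  set S := ∑ π : Perm (Fin N), (Perm.sign π : ℤ) * (if f π then 0 else 1) with hSdef
  have hP : 2 * ({π : Perm (Fin N) | Perm.sign π = 1 ↔ f π}.ncard : ℤ) = N.factorial - 2 * S := by
    have : (N.factorial : ℤ) - 2 * S = N.factorial - 2 * S + ∑ π : Perm (Fin N), (Perm.sign π : ℤ) := by
      rw [hsig, add_zero]
    rw [this, hcard, ← hone, hSdef, mul_sum, mul_sum, ← sum_sub_distrib, ← sum_add_distrib]
    apply sum_congr rfl
    intro π _
    rcases Int.units_eq_one_or (Perm.sign π) with e | e <;> by_cases hf : f π <;> simp [e, hf]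
  have hM : 2 * ({π : Perm (Fin N) | Perm.sign π = -1 ↔ f π}.ncard : ℤ) = N.factorial + 2 * S := by
    have : (N.factorial : ℤ) + 2 * S = N.factorial + 2 * S - ∑ π : Perm (Fin N), (Perm.sign π : ℤ) := by
      rw [hsig, sub_zero]
    rw [this, hcard, ← hone, hSdef, mul_sum, mul_sum, ← sum_add_distrib, ← sum_sub_distrib]
    apply sum_congr rfl
    intro π _
    rcases Int.units_eq_one_or (Perm.sign π) with e | e <;> by_cases hf : f π <;> simp [e, hf]
  rcases abs_cases S with ⟨e, _⟩ | ⟨e, _⟩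
  · exact ⟨-1, by omega⟩
  · exact ⟨1, by omega⟩

end CayA

theorem stmt14 (n : ℕ) (hn : 1 ≤ n)
    (G : SimpleGraph (Equiv.Perm (Fin (n + 1))))
    (hG : G = SimpleGraph.fromRel
      (fun π τ => ∃ k : Fin n, τ = Equiv.swap k.castSucc k.succ * π)) :
    ∃ K : Set (Equiv.Perm (Fin (n + 1))),
      Nat.factorial (n + 1) / 2 + Nat.factorial ((n + 1) / 2) ≤ K.ncard ∧
      ∀ π ∈ K, (K ∩ G.neighborSet π).ncard ≤ ⌈Real.sqrt (((n + 1) / 2 : ℕ) : ℝ)⌉₊ := by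
  classical
  set m := (n + 1) / 2 with hm
  set k := ⌈Real.sqrt (m : ℝ)⌉₊ with hk
  have h : 2 * m ≤ n + 1 := by omega
  have hm0 : 0 < m := by omega
  have hk0 : 0 < k := by
    rw [hk, Nat.ceil_pos]
    exact Real.sqrt_pos.2 (by exact_mod_cast hm0)
  have hmk : m ≤ k * k := by
    have h1 : Real.sqrt (m : ℝ) ≤ k := Nat.le_ceil _
    have h2 : (m : ℝ) ≤ k * k := by
      rw [← sq]
      exact (Real.sqrt_le_left (by positivity)).1 h1
    exact_mod_cast h2
  obtain ⟨ε, hε⟩ := CayA.exists_eps (N := n + 1) (by omega)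
    (fun π => CayA.FF k (CayA.bb h π)) _ (CayA.signed_sum h k hm0 (by omega))
  refine ⟨_, hε, ?_⟩
  intro π hπ
  apply CayA.deg_bound h k hk0 hmk π
  rintro τ ⟨hτ, hadj⟩
  have hex : ∃ t : Fin n, τ = Equiv.swap t.castSucc t.succ * π := by
    rw [hG, SimpleGraph.mem_neighborSet, SimpleGraph.fromRel_adj] at hadj
    obtain ⟨_, ⟨t, ht⟩ | ⟨t, ht⟩⟩ := hadj
    · exact ⟨t, ht⟩
    · exact ⟨t, by rw [ht, ← mul_assoc, Equiv.swap_mul_self, one_mul]⟩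
  obtain ⟨t, ht⟩ := hex
  refine ⟨⟨t.castSucc, t.succ, by simp, ht⟩, ?_⟩
  have hs : Equiv.Perm.sign τ = - Equiv.Perm.sign π := by
    rw [ht, Equiv.Perm.sign_mul, Equiv.Perm.sign_swap (Fin.castSucc_lt_succ).ne]
    simp
  simp only [Set.mem_ofPred_eq] at hπ hτ
  intro hiff
  rw [hiff, ← hπ, hs] at hτ
  rcases Int.units_eq_one_or (Equiv.Perm.sign π) with e | e <;>
    rcases Int.units_eq_one_or ε with e' | e' <;> rw [e, e'] at hτ <;> revert hτ <;> decide
end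

section
/- Let V be a finite set with |V| = n, and let A be a symmetric real matrix indexed by V with all entries in {0,1} (diagonal entries, i.e., loops, allowed) such that every row of A sums to d. Let λ ≥ 0 and suppose that for every vector v ∈ ℝ^V orthogonal to the all-ones vector, ‖A v‖ ≤ λ·‖v‖. Then for every partition of V into disjoint nonempty sets S and T with S ∪ T = V, the number of ordered edges between S and T satisfies e(S,T) = Σ_{s ∈ S, t ∈ T} A_{s,t} ≥ (d − λ)·|S|·|T|/n. -/
/-- Expander mixing bound for partitions: if `A` is the (symmetric, 0/1, possibly with
loops) adjacency matrix of a `d`-regular graph on `n` vertices, all of whose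
eigenvalues on the orthogonal complement of the all-ones vector are at most `λ` in
absolute value, then for every partition `V = S ⊔ T` into nonempty parts the number of
ordered edges between `S` and `T` is at least `(d − λ)·|S|·|T|/n`. -/
theorem stmt15 {V : Type*} [Fintype V] [DecidableEq V] (A : Matrix V V ℝ)
    (hsymm : A.IsSymm) (h01 : ∀ u v : V, A u v = 0 ∨ A u v = 1)
    (d : ℝ) (hreg : ∀ u : V, ∑ v : V, A u v = d)
    (lam : ℝ) (hlam0 : 0 ≤ lam)
    (hlam : ∀ v : V → ℝ, (∑ x : V, v x) = 0 →
      Real.sqrt (∑ x : V, (A.mulVec v x) ^ 2) ≤ lam * Real.sqrt (∑ x : V, (v x) ^ 2))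
    (S T : Finset V) (hS : S.Nonempty) (hT : T.Nonempty)
    (hunion : S ∪ T = Finset.univ) (hdisj : Disjoint S T) :
    (d - lam) * S.card * T.card / (Fintype.card V : ℝ) ≤ ∑ s ∈ S, ∑ t ∈ T, A s t := by
  have hsplit : ∀ f : V → ℝ, ∑ x : V, f x = ∑ x ∈ S, f x + ∑ x ∈ T, f x := by
    intro f
    rw [← hunion, Finset.sum_union hdisj]
  have hn : (Fintype.card V : ℝ) = S.card + T.card := by
    rw [← Finset.card_univ, ← hunion, Finset.card_union_of_disjoint hdisj]
    push_cast
    rfl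
  have hs : (0 : ℝ) < S.card := by exact_mod_cast hS.card_pos
  have ht : (0 : ℝ) < T.card := by exact_mod_cast hT.card_pos
  rw [hn]
  generalize hsd : (S.card : ℝ) = s at *
  generalize htd : (T.card : ℝ) = t at *
  have hTS : ∀ x ∈ T, x ∉ S := fun x hx hx' => Finset.disjoint_left.mp hdisj hx' hx
  let v : V → ℝ := fun x => if x ∈ S then t else -s
  have hvS : ∀ x ∈ S, v x = t := fun x hx => if_pos hx
  have hvT : ∀ x ∈ T, v x = -s := fun x hx => if_neg (hTS x hx)
  have sumv : ∀ f : V → ℝ, ∑ x : V, v x * f x = t * ∑ x ∈ S, f x - s * ∑ x ∈ T, f x := by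
    intro f
    rw [hsplit, Finset.mul_sum, Finset.mul_sum,
      Finset.sum_congr rfl (fun x hx => by rw [hvS x hx] : ∀ x ∈ S, v x * f x = t * f x),
      Finset.sum_congr rfl (fun x hx => by rw [hvT x hx, neg_mul] :
        ∀ x ∈ T, v x * f x = -(s * f x)), Finset.sum_neg_distrib]
    ring
  have hv0 : ∑ x : V, v x = 0 := by
    have := sumv (fun _ => 1)
    simp only [mul_one, Finset.sum_const, nsmul_eq_mul, hsd, htd] at this
    rw [this]; ring
  have hv2 : ∑ x : V, (v x) ^ 2 = s * t * (s + t) := by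
    have := sumv v
    rw [Finset.sum_congr rfl hvS, Finset.sum_congr rfl hvT] at this
    simp only [Finset.sum_const, nsmul_eq_mul, hsd, htd] at this
    simp only [pow_two]
    rw [this]; ring
  have hA : ∀ x, A.mulVec v x = t * d - (s + t) * ∑ y ∈ T, A x y := by
    intro x
    have h1 := sumv (A x)
    have h2 := hsplit (A x)
    rw [hreg] at h2
    have h3 : A.mulVec v x = ∑ y, v y * A x y := by
      simp only [Matrix.mulVec, dotProduct, mul_comm]
    rw [h3, h1, h2]; ring
  have hTT : ∑ x ∈ T, ∑ y ∈ T, A x y = d * t - ∑ x ∈ S, ∑ y ∈ T, A x y := by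
    have h1 := hsplit (fun x => ∑ y ∈ T, A x y)
    have hc : ∑ x, ∑ y ∈ T, A x y = ∑ y ∈ T, ∑ x, A x y := Finset.sum_comm
    beta_reduce at h1
    rw [hc] at h1
    have h2 : ∀ y ∈ T, ∑ x, A x y = d := by
      intro y _
      rw [← hreg y]
      exact Finset.sum_congr rfl (fun x _ => hsymm.apply y x)
    rw [Finset.sum_congr rfl h2] at h1
    simp only [Finset.sum_const, nsmul_eq_mul, htd] at h1
    linarith
  have hq : ∑ x, v x * A.mulVec v x
      = (s + t) * (s * d * t - (s + t) * ∑ x ∈ S, ∑ y ∈ T, A x y) := by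
    rw [sumv]
    simp only [hA, Finset.sum_sub_distrib, ← Finset.mul_sum, Finset.sum_const, nsmul_eq_mul,
      hsd, htd, hTT]
    ring
  have hcs := Real.sum_mul_le_sqrt_mul_sqrt Finset.univ v (A.mulVec v)
  have hb := mul_le_mul_of_nonneg_left (hlam v hv0) (Real.sqrt_nonneg (∑ x : V, (v x) ^ 2))
  have hsq : Real.sqrt (∑ x : V, (v x) ^ 2) * Real.sqrt (∑ x : V, (v x) ^ 2)
      = s * t * (s + t) := by
    rw [← hv2]; exact Real.mul_self_sqrt (Finset.sum_nonneg fun x _ => sq_nonneg _)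
  have hfin : (s + t) * (s * d * t - (s + t) * ∑ x ∈ S, ∑ y ∈ T, A x y)
      ≤ (s + t) * (lam * (s * t)) := by
    rw [← hq]
    calc _ ≤ _ := hcs
      _ ≤ _ := hb
      _ = lam * (Real.sqrt (∑ x : V, (v x) ^ 2) * Real.sqrt (∑ x : V, (v x) ^ 2)) := by ring
      _ = _ := by rw [hsq]; ring
  have hst : 0 < s + t := by linarith
  have h := le_of_mul_le_mul_left hfin hst
  rw [div_le_iff₀ hst]
  linarith
end

section
/- Let q ≥ 2 and let (P, L) be a finite projective plane of order q (so |P| = |L| = q² + q + 1, every line contains q+1 points and every point lies on q+1 lines). Let L_q be its Levi graph: the bipartite simple graph on vertex set P ⊔ L in which a point p and a line ℓ are adjacent iff p lies on ℓ (and no two points and no two lines are adjacent). Then for every set U of vertices of L_q with |U| > q² + q + 1, some vertex of U has more than (q + 1 − √q)/2 neighbors in U. -/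
set_option maxHeartbeats 1000000 in
open Finset in
/-- The second-moment (expander-mixing type) argument, for a symmetric-design-like incidence
relation with parameters of a projective plane. -/
theorem levi_aux {X Y : Type*} [Fintype X] [Fintype Y] (I : X → Y → Prop) [∀ x y, Decidable (I x y)]
    (q : ℕ) (hX : Fintype.card X = q ^ 2 + q + 1) (hY : Fintype.card Y = q ^ 2 + q + 1)
    (h1 : ∀ x, #{y | I x y} = q + 1)
    (h2 : ∀ x x', x ≠ x' → #{y | I x y ∧ I x' y} = 1)
    (A : Finset X) (B : Finset Y) (hAB : #B ≤ #A) (hU : q ^ 2 + q + 1 < #A + #B) :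
    ∃ y ∈ B, ((q : ℝ) + 1 - Real.sqrt q) / 2 < (#{x ∈ A | I x y} : ℝ) := by
  classical
  by_contra hcon
  push Not at hcon
  set s := Real.sqrt q with hs
  have hs0 : 0 ≤ s := Real.sqrt_nonneg _
  have hss : s ^ 2 = q := Real.sq_sqrt (by positivity)
  set d : ℝ := ((q : ℝ) + 1 - s) / 2 with hd
  let x : Y → ℝ := fun y => ∑ p ∈ A, if I p y then 1 else 0
  have hx : ∀ y, (#{x ∈ A | I x y} : ℝ) = x y := by
    intro y; simp [x]
  have hA : #A ≤ q ^ 2 + q + 1 := hX ▸ Finset.card_le_univ A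
  have hB : #B ≤ q ^ 2 + q + 1 := hY ▸ Finset.card_le_univ B
  have hS1 : ∑ y, x y = (q + 1) * #A := by
    simp only [x]
    rw [Finset.sum_comm]
    have : ∀ p ∈ A, (∑ y, if I p y then (1:ℝ) else 0) = q + 1 := by
      intro p _
      have := h1 p
      simp [this]
    rw [Finset.sum_congr rfl this]
    simp; ring
  have hS2 : ∑ y, x y ^ 2 = #A * (q + #A) := by
    simp only [x, sq, Finset.sum_mul_sum]
    rw [Finset.sum_comm]
    have : ∀ p ∈ A, (∑ y, ∑ p' ∈ A, (if I p y then (1:ℝ) else 0) * (if I p' y then 1 else 0))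
        = q + #A := by
      intro p hp
      rw [Finset.sum_comm]
      have : ∀ p' ∈ A, (∑ y, (if I p y then (1:ℝ) else 0) * (if I p' y then 1 else 0))
          = (if p = p' then (q:ℝ) else 0) + 1 := by
        intro p' _
        have e : ∀ y, (if I p y then (1:ℝ) else 0) * (if I p' y then 1 else 0)
            = if I p y ∧ I p' y then 1 else 0 := by
          intro y
          by_cases a : I p y <;> by_cases b : I p' y <;> simp [a, b]
        simp only [e]
        rw [Finset.sum_boole]
        by_cases h : p = p'
        · subst h
          have := h1 p
          simp [this]
        · rw [h2 p p' h]; simp [h]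
      rw [Finset.sum_congr rfl this]
      simp [Finset.sum_add_distrib, hp]
    rw [Finset.sum_congr rfl this]
    simp; ring
  set N : ℝ := (q:ℝ) ^ 2 + q + 1 with hN
  have hYN : (Fintype.card Y : ℝ) = N := by rw [hY]; push_cast; rfl
  set a : ℝ := (A.card : ℝ) with ha
  set b : ℝ := (B.card : ℝ) with hb
  have hA' : a ≤ N := by rw [ha, hN]; exact_mod_cast hA
  have hB' : b ≤ N := by rw [hb, hN]; exact_mod_cast hB
  have hU' : N < a + b := by rw [ha, hb, hN]; exact_mod_cast hU
  have hAB' : b ≤ a := by rw [ha, hb]; exact_mod_cast hAB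
  have hq0 : (0:ℝ) ≤ q := by positivity
  have hN0 : 0 < N := by positivity
  have hb0 : 0 < b := by linarith
  have ha0 : 0 < a := by linarith
  let z : Y → ℝ := fun y => (q + 1) * a - N * x y
  have hZ1 : ∑ y, z y = 0 := by
    simp only [z, Finset.sum_sub_distrib, ← Finset.mul_sum, hS1]
    simp [hYN]; ring
  have hZ2 : ∑ y, z y ^ 2 = q * a * (N - a) * N := by
    have e : ∀ y, z y ^ 2 = ((q + 1) * a) ^ 2 - 2 * ((q + 1) * a) * N * x y + N ^ 2 * x y ^ 2 := by
      intro y; simp only [z]; ring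
    simp only [e, Finset.sum_add_distrib, Finset.sum_sub_distrib, ← Finset.mul_sum, hS1, hS2]
    simp [hYN]
    rw [hN]; ring
  set t : ℝ := (q + 1) * a - N * d with ht
  have ht0 : 0 ≤ t := by
    have h9 : 0 ≤ ((q:ℝ) + 1) * (2 * a - N) := mul_nonneg (by linarith) (by linarith)
    have h10 : 0 ≤ N * s := mul_nonneg hN0.le hs0
    rw [ht, hd]
    linarith
  have hzB : ∀ y ∈ B, t ≤ z y := by
    intro y hy
    have := hcon y hy
    rw [hx] at this
    have h9 := mul_le_mul_of_nonneg_left this hN0.le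
    simp only [z, ht]
    linarith
  have hB1 : b * t ≤ ∑ y ∈ B, z y := by
    have := Finset.card_nsmul_le_sum B z t hzB
    simpa using this
  have hB2 : b * t ^ 2 ≤ ∑ y ∈ B, z y ^ 2 := by
    have := Finset.card_nsmul_le_sum B (fun y => z y ^ 2) (t ^ 2)
      (fun y hy => pow_le_pow_left₀ ht0 (hzB y hy) 2)
    simpa using this
  have hC1 := Finset.sum_add_sum_compl B z
  have hC2 := Finset.sum_add_sum_compl B (fun y => z y ^ 2)
  have hcs := sq_sum_le_card_mul_sum_sq (s := Bᶜ) (f := z)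
  have hcc : (#Bᶜ : ℝ) = N - b := by
    rw [Finset.card_compl, Nat.cast_sub (Finset.card_le_univ B), hYN]
  rw [hcc] at hcs
  have k1 : (b * t) ^ 2 ≤ (∑ y ∈ Bᶜ, z y) ^ 2 := by
    have : ∑ y ∈ Bᶜ, z y = - ∑ y ∈ B, z y := by linarith
    rw [this, neg_sq]
    exact pow_le_pow_left₀ (by positivity) hB1 2
  have k2 : (∑ y ∈ Bᶜ, z y ^ 2) ≤ q * a * (N - a) * N - b * t ^ 2 := by
    linarith
  have k3 : (b * t) ^ 2 ≤ (N - b) * (q * a * (N - a) * N - b * t ^ 2) :=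
    k1.trans (hcs.trans (mul_le_mul_of_nonneg_left k2 (by linarith)))
  have k4 : N * (b * t ^ 2) ≤ N * ((N - b) * (q * a * (N - a))) := by linarith
  have k5 : b * t ^ 2 ≤ (N - b) * (q * a * (N - a)) := le_of_mul_le_mul_left k4 hN0
  have k6 : (N - b) * (N - a) ≤ a * b :=
    mul_le_mul (by linarith) (by linarith) (by linarith) ha0.le
  have k7 : b * t ^ 2 ≤ b * (s * a) ^ 2 := by
    have := mul_le_mul_of_nonneg_left k6 (mul_nonneg hq0 ha0.le)
    rw [mul_pow, hss]; linarith
  have k8 : t ≤ s * a :=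
    le_of_sq_le_sq (le_of_mul_le_mul_left k7 hb0) (by positivity)
  have hd0 : 0 < (q:ℝ) + 1 - s := by
    have h9 : 0 ≤ s ^ 2 - 2 * s + 1 := by
      have := sq_nonneg (s - 1)
      linarith
    rw [hss] at h9
    linarith
  have : ((q:ℝ) + 1 - s) * a ≤ N * (((q:ℝ) + 1 - s) / 2) := by
    rw [← hd]; linarith
  have h9 := mul_pos hd0 (show 0 < 2 * a - N by linarith)
  linarith

open Configuration in
theorem levi_two {P L : Type*} [Fintype P] [Fintype L] [Membership P L]
    [ProjectivePlane P L] (p p' : P) (h : p ≠ p')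
    [∀ l : L, Decidable (p ∈ l ∧ p' ∈ l)] :
    (Finset.univ.filter (fun l : L => p ∈ l ∧ p' ∈ l)).card = 1 := by
  rw [Finset.card_eq_one]
  refine ⟨HasLines.mkLine h, ?_⟩
  ext l
  have hm := HasLines.mkLine_ax (L := L) h
  simp only [Finset.mem_filter, Finset.mem_univ, true_and, Finset.mem_singleton]
  constructor
  · intro hl
    exact (Nondegenerate.eq_or_eq hl.1 hl.2 hm.1 hm.2).resolve_left h
  · rintro rfl; exact hm

open Configuration in
theorem levi_two' {P L : Type*} [Fintype P] [Fintype L] [Membership P L]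
    [ProjectivePlane P L] (l l' : L) (h : l ≠ l')
    [∀ p : P, Decidable (p ∈ l ∧ p ∈ l')] :
    (Finset.univ.filter (fun p : P => p ∈ l ∧ p ∈ l')).card = 1 := by
  rw [Finset.card_eq_one]
  refine ⟨HasPoints.mkPoint h, ?_⟩
  ext p
  have hm := HasPoints.mkPoint_ax (P := P) h
  simp only [Finset.mem_filter, Finset.mem_univ, true_and, Finset.mem_singleton]
  constructor
  · intro hl
    exact (Nondegenerate.eq_or_eq hl.1 hm.1 hl.2 hm.2).resolve_right h
  · rintro rfl; exact hm



/-- In the Levi (point–line incidence) graph of a finite projective plane of order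
`q ≥ 2`, every vertex set `U` with `|U| > q² + q + 1` contains a vertex with more than
`(q + 1 − √q)/2` neighbors in `U`. -/
theorem stmt17 {P L : Type*} [Fintype P] [Fintype L] [Membership P L]
    [Configuration.ProjectivePlane P L]
    (q : ℕ) (hq : 2 ≤ q) (hq' : q = Configuration.ProjectivePlane.order P L)
    (G : SimpleGraph (P ⊕ L))
    (hG : G = SimpleGraph.fromRel
      (fun x y => ∃ (p : P) (l : L), x = Sum.inl p ∧ y = Sum.inr l ∧ p ∈ l)) :
    ∀ U : Set (P ⊕ L), q ^ 2 + q + 1 < U.ncard →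
      ∃ x ∈ U, ((q : ℝ) + 1 - Real.sqrt q) / 2 < ((U ∩ G.neighborSet x).ncard : ℝ) := by

  classical
  intro U hU
  have hP := Configuration.ProjectivePlane.card_points P L
  have hL := Configuration.ProjectivePlane.card_lines P L
  rw [← hq'] at hP hL
  have hl1 : ∀ p : P, (Finset.univ.filter (fun l : L => p ∈ l)).card = q + 1 := by
    intro p
    have := Configuration.ProjectivePlane.lineCount_eq (L := L) p
    rw [← hq', Configuration.lineCount, Nat.card_eq_fintype_card, Fintype.card_subtype] at this
    exact this
  have hp1 : ∀ l : L, (Finset.univ.filter (fun p : P => p ∈ l)).card = q + 1 := by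
    intro l
    have := Configuration.ProjectivePlane.pointCount_eq (P := P) l
    rw [← hq', Configuration.pointCount, Nat.card_eq_fintype_card, Fintype.card_subtype] at this
    exact this
  let A : Finset P := Finset.univ.filter (fun p => Sum.inl p ∈ U)
  let B : Finset L := Finset.univ.filter (fun l => Sum.inr l ∈ U)
  have hUE : U = ((A.disjSum B : Finset (P ⊕ L)) : Set (P ⊕ L)) := by
    ext x
    cases x <;> simp [A, B]
  have hcard : U.ncard = A.card + B.card := by
    rw [hUE, Set.ncard_coe_finset, Finset.card_disjSum]
  rw [hcard] at hU
  have nl : ∀ p : P, (U ∩ G.neighborSet (Sum.inl p)).ncard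
      = (B.filter (fun l => p ∈ l)).card := by
    intro p
    have : U ∩ G.neighborSet (Sum.inl p)
        = Sum.inr '' ((B.filter (fun l => p ∈ l) : Finset L) : Set L) := by
      ext x
      cases x <;> simp [hG, B]
    rw [this, Set.ncard_image_of_injective _ Sum.inr_injective, Set.ncard_coe_finset]
  have np : ∀ l : L, (U ∩ G.neighborSet (Sum.inr l)).ncard
      = (A.filter (fun p => p ∈ l)).card := by
    intro l
    have : U ∩ G.neighborSet (Sum.inr l)
        = Sum.inl '' ((A.filter (fun p => p ∈ l) : Finset P) : Set P) := by
      ext x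
      cases x <;> simp [hG, A]
    rw [this, Set.ncard_image_of_injective _ Sum.inl_injective, Set.ncard_coe_finset]
  rcases le_total B.card A.card with h | h
  · obtain ⟨l, hl, hh⟩ := levi_aux (fun (p : P) (l : L) => p ∈ l) q hP hL hl1
      (fun p p' hpp => levi_two p p' hpp) A B h hU
    refine ⟨Sum.inr l, by simpa [B] using hl, ?_⟩
    rw [np]; exact hh
  · obtain ⟨p, hp, hh⟩ := levi_aux (fun (l : L) (p : P) => p ∈ l) q hL hP hp1
      (fun l l' hll => levi_two' l l' hll) B A h (by omega)
    refine ⟨Sum.inl p, by simpa [A] using hp, ?_⟩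
    rw [nl]; exact hh
end

section
/- Let Γ be a finite group of order n and C ⊆ Γ a generating set with C = C⁻¹ and 1 ∉ C, and suppose C is a minimal Cayley generating set in the sense that for every c ∈ C, the set C \ {c, c⁻¹} does not generate Γ. Let d = |C|, let A be the adjacency matrix of Cay(Γ, C) (so A_{x,y} = 1 iff x⁻¹y ∈ C), and let λ ≥ 0 be such that for every vector v ∈ ℝ^Γ orthogonal to the all-ones vector, ‖A v‖ ≤ λ·‖v‖. Then λ ≥ d − 4. -/
/-- If `Cay(Γ, C)` is a minimal Cayley graph (no generator together with its inverse
can be dropped) of a finite group of order `n`, and it is an `(n,d,λ)`-graph (all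
nontrivial eigenvalues of its adjacency matrix of absolute value at most `λ`), then
`λ ≥ d − 4` where `d = |C|`. -/
theorem stmt18 {Γ : Type*} [Group Γ] [Fintype Γ] [DecidableEq Γ] (C : Finset Γ)
    (hsym : ∀ c ∈ C, c⁻¹ ∈ C) (h1 : (1 : Γ) ∉ C)
    (hgen : Subgroup.closure (C : Set Γ) = ⊤)
    (hmin : ∀ c ∈ C, Subgroup.closure ((C : Set Γ) \ {c, c⁻¹}) ≠ ⊤)
    (A : Matrix Γ Γ ℝ)
    (hA : A = Matrix.of fun x y => if x⁻¹ * y ∈ C then (1 : ℝ) else 0)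
    (lam : ℝ) (hlam0 : 0 ≤ lam)
    (hlam : ∀ v : Γ → ℝ, (∑ x : Γ, v x) = 0 →
      Real.sqrt (∑ x : Γ, (A.mulVec v x) ^ 2) ≤ lam * Real.sqrt (∑ x : Γ, (v x) ^ 2)) :
    (C.card : ℝ) - 4 ≤ lam := by
  classical
  by_cases hd : (C.card : ℝ) ≤ 4
  · linarith
  push Not at hd
  have hne : C.Nonempty := by
    rw [← Finset.card_pos]
    by_contra h
    have h0 : C.card = 0 := by omega
    rw [h0] at hd
    norm_num at hd
  obtain ⟨c, hc⟩ := hne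
  have hH := hmin c hc
  set H := Subgroup.closure ((C : Set Γ) \ {c, c⁻¹}) with hHdef
  obtain ⟨g, hg⟩ : ∃ g, g ∉ H := by
    by_contra h
    push Not at h
    exact hH ((Subgroup.eq_top_iff' H).2 h)
  have hmem : ∀ s ∈ C, s ∉ ({c, c⁻¹} : Finset Γ) → s ∈ H := by
    intro s hs hs'
    apply Subgroup.subset_closure
    refine ⟨hs, ?_⟩
    simpa using hs'
  set u : Γ → ℝ := fun x => if x ∈ H then 1 else 0 with hu
  have hu01 : ∀ x, u x = 0 ∨ u x = 1 := by
    intro x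
    by_cases h : x ∈ H <;> simp [hu, h]
  set v : Γ → ℝ := fun x => u x - u (g⁻¹ * x) with hv
  have hsum : ∑ x : Γ, v x = 0 := by
    simp only [hv, Finset.sum_sub_distrib]
    rw [sub_eq_zero]
    exact (Equiv.sum_comp (Equiv.mulLeft g⁻¹) u).symm
  have hv1 : v 1 = 1 := by
    simp [hv, hu, hg, H.one_mem]
  have hvv : ∀ x, v x = 0 ∨ v x = 1 ∨ v x = -1 := by
    intro x
    simp only [hv]
    rcases hu01 x with h | h <;> rcases hu01 (g⁻¹ * x) with h' | h' <;> rw [h, h'] <;> norm_num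
  have hinv : ∀ x, ∀ s ∈ H, v (x * s) = v x := by
    intro x s hs
    simp only [hv, hu, ← mul_assoc, H.mul_mem_cancel_right hs]
  have hAv : ∀ x, A.mulVec v x = ∑ s ∈ C, v (x * s) := by
    intro x
    rw [hA]
    simp only [Matrix.mulVec, dotProduct, Matrix.of_apply]
    rw [← Equiv.sum_comp (Equiv.mulLeft x)]
    simp
  have hclose : ∀ x, |A.mulVec v x - C.card * v x| ≤ 4 := by
    intro x
    have e : A.mulVec v x - C.card * v x = ∑ s ∈ C, (v (x * s) - v x) := by
      rw [hAv, Finset.sum_sub_distrib (fun s => v (x * s)) (fun _ => v x), Finset.sum_const, nsmul_eq_mul]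
    rw [e]
    calc |∑ s ∈ C, (v (x * s) - v x)| ≤ ∑ s ∈ C, |v (x * s) - v x| :=
          Finset.abs_sum_le_sum_abs _ _
      _ ≤ ∑ s ∈ C, (if s ∈ ({c, c⁻¹} : Finset Γ) then (2 : ℝ) else 0) := by
          apply Finset.sum_le_sum
          intro s hs
          split_ifs with h
          · rcases hvv x with h | h | h <;> rcases hvv (x * s) with h' | h' | h' <;>
              rw [h, h'] <;> norm_num
          · rw [hinv x s (hmem s hs h)]
            simp
      _ = ((C.filter (· ∈ ({c, c⁻¹} : Finset Γ))).card : ℝ) * 2 := by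
          rw [← Finset.sum_filter]
          simp
      _ ≤ 4 := by
          have h2 : (C.filter (· ∈ ({c, c⁻¹} : Finset Γ))).card ≤ 2 :=
            (Finset.card_le_card (fun s hs => (Finset.mem_filter.1 hs).2)).trans
              Finset.card_le_two
          have h3 : ((C.filter (· ∈ ({c, c⁻¹} : Finset Γ))).card : ℝ) ≤ 2 := by
            exact_mod_cast h2
          linarith
  have hpt : ∀ x, ((C.card : ℝ) - 4) ^ 2 * v x ^ 2 ≤ A.mulVec v x ^ 2 := by
    intro x
    have h := abs_le.1 (hclose x)
    rcases hvv x with h' | h' | h' <;> rw [h'] at h ⊢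
    · nlinarith [sq_nonneg (A.mulVec v x)]
    · nlinarith [h.1, h.2]
    · nlinarith [h.1, h.2]
  have hpos : 0 < ∑ x : Γ, v x ^ 2 := by
    apply Finset.sum_pos' (fun x _ => sq_nonneg _)
    exact ⟨1, Finset.mem_univ _, by rw [hv1]; norm_num⟩
  have hle : ((C.card : ℝ) - 4) * Real.sqrt (∑ x : Γ, v x ^ 2)
      ≤ Real.sqrt (∑ x : Γ, A.mulVec v x ^ 2) := by
    apply Real.le_sqrt_of_sq_le
    rw [mul_pow, Real.sq_sqrt hpos.le, Finset.mul_sum]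
    exact Finset.sum_le_sum fun x _ => hpt x
  exact le_of_mul_le_mul_right (hle.trans (hlam v hsum)) (Real.sqrt_pos.2 hpos)
end

section
/- Let r ≥ 1 and let G be the graph on vertex set (ℤ/3ℤ)^r in which x and y are adjacent iff x − y = ±e_i for some standard basis vector e_i, equivalently iff x and y differ in exactly one coordinate (this is the Cayley graph of ℤ_3^r with respect to the standard generators and their inverses). Then: (i) every independent set of G has at most 3^{r−1} elements; and (ii) there exist disjoint sets A, B ⊆ (ℤ/3ℤ)^r with |A| = 3^{r−1} + 1 and |B| = 3^{r−1} such that the subgraph of G induced by A has maximum degree at most 1 and B is an independent set. In particular, G has a set of more than α(G) vertices inducing a subgraph of maximum degree 1. -/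
/-- `x` and `y` differ in exactly one coordinate. -/
def HAdjH {n : ℕ} (x y : Fin n → ZMod 3) : Prop :=
  ∃ i, x i ≠ y i ∧ ∀ j, j ≠ i → x j = y j

/-- The vectors of coordinate sum two. -/
def BsetH (n : ℕ) : Set (Fin n → ZMod 3) := {x | ∑ i, x i = 2}

/-- The recursively constructed set of maximum induced degree one. -/
def AsetH : (n : ℕ) → Set (Fin (n + 1) → ZMod 3)
  | 0 => {x | x 0 ≠ 2}
  | n + 1 => {x | (x 0 = 0 ∧ Fin.tail x ∈ AsetH n) ∨ (x 0 ≠ 0 ∧ Fin.tail x ∈ BsetH (n + 1))}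

lemma hadjH_succ {n : ℕ} {x y : Fin (n + 1) → ZMod 3} (h : HAdjH x y) :
    (x 0 ≠ y 0 ∧ Fin.tail x = Fin.tail y) ∨ (x 0 = y 0 ∧ HAdjH (Fin.tail x) (Fin.tail y)) := by
  obtain ⟨i, hi, hj⟩ := h
  induction i using Fin.cases with
  | zero =>
    left
    refine ⟨hi, ?_⟩
    funext j
    exact hj j.succ (Fin.succ_ne_zero j)
  | succ i =>
    right
    refine ⟨hj 0 (Fin.succ_ne_zero i).symm, i, hi, fun j hji => ?_⟩
    exact hj j.succ (fun h => hji (Fin.succ_injective _ h))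

lemma hadjH_of_tail {n : ℕ} {x y : Fin (n + 1) → ZMod 3} (hne : x ≠ y)
    (h : Fin.tail x = Fin.tail y) : HAdjH x y := by
  have ht : ∀ j : Fin n, x j.succ = y j.succ := fun j => congrFun h j
  refine ⟨0, fun h0 => hne ?_, fun j hj => ?_⟩
  · funext j
    induction j using Fin.cases with
    | zero => exact h0
    | succ j => exact ht j
  · induction j using Fin.cases with
    | zero => exact absurd rfl hj
    | succ j => exact ht j

lemma BsetH_indep {n : ℕ} {x y : Fin n → ZMod 3} (hx : x ∈ BsetH n) (hy : y ∈ BsetH n) :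
    ¬ HAdjH x y := by
  rintro ⟨i, hi, hj⟩
  apply hi
  have h : ∑ k, x k = ∑ k, y k := Eq.trans hx (Eq.symm hy)
  rw [← Finset.add_sum_erase _ _ (Finset.mem_univ i),
    ← Finset.add_sum_erase _ y (Finset.mem_univ i)] at h
  rw [Finset.sum_congr rfl (fun k hk => hj k (Finset.ne_of_mem_erase hk))] at h
  exact add_right_cancel h

lemma sumH {n : ℕ} (x : Fin (n + 1) → ZMod 3) : ∑ i, x i = x 0 + ∑ i, Fin.tail x i :=
  Fin.sum_univ_succ x

lemma AsetH_disj : ∀ (n : ℕ) (x : Fin (n + 1) → ZMod 3), x ∈ AsetH n → x ∉ BsetH (n + 1)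
  | 0, x, h, hb => by
    apply h
    simpa [BsetH] using hb
  | n + 1, x, h, hb => by
    have hb' : ∑ i, x i = 2 := hb
    rw [sumH] at hb'
    rcases h with ⟨h0, h⟩ | ⟨h0, h⟩
    · rw [h0, zero_add] at hb'
      exact AsetH_disj n _ h hb'
    · have h' : ∑ i, Fin.tail x i = 2 := h
      rw [h'] at hb'
      exact h0 (by simpa using hb')

lemma third_elemH (d a b c : ZMod 3) (h1 : a ≠ d) (h2 : b ≠ d) (h3 : c ≠ d) (h4 : a ≠ b)
    (h5 : a ≠ c) : b = c := by
  have key : ∀ d a b c : ZMod 3, a = d ∨ b = d ∨ c = d ∨ a = b ∨ a = c ∨ b = c := by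
    set_option synthInstance.maxSize 2000 in
    set_option synthInstance.maxHeartbeats 400000 in
    decide
  have := key d a b c
  tauto

lemma AsetH_deg : ∀ (n : ℕ) (v x y : Fin (n + 1) → ZMod 3), v ∈ AsetH n → x ∈ AsetH n →
    y ∈ AsetH n → HAdjH v x → HAdjH v y → x = y
  | 0, v, x, y, hv, hx, hy, hvx, hvy => by
    have key : ∀ a b c : ZMod 3, a ≠ 2 → b ≠ 2 → c ≠ 2 → a ≠ b → a ≠ c → b = c :=
      third_elemH 2
    obtain ⟨i, hi, -⟩ := hvx
    obtain ⟨j, hj, -⟩ := hvy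
    funext k
    have e1 : i = 0 := Fin.fin_one_eq_zero _
    have e2 : j = 0 := Fin.fin_one_eq_zero _
    have e3 : k = 0 := Fin.fin_one_eq_zero _
    subst e1 e2 e3
    exact key _ _ _ hv hx hy hi hj
  | n + 1, v, x, y, hv, hx, hy, hvx, hvy => by
    have key : ∀ a b c : ZMod 3, a ≠ 0 → b ≠ 0 → c ≠ 0 → a ≠ b → a ≠ c → b = c :=
      third_elemH 0
    suffices h : x 0 = y 0 ∧ Fin.tail x = Fin.tail y by
      rw [← Fin.cons_self_tail x, ← Fin.cons_self_tail y, h.1, h.2]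
    rcases hv with ⟨hv0, hv⟩ | ⟨hv0, hv⟩
    · have main : ∀ z, z ∈ AsetH (n + 1) → HAdjH v z →
          z 0 = 0 ∧ Fin.tail z ∈ AsetH n ∧ HAdjH (Fin.tail v) (Fin.tail z) := by
        intro z hz hvz
        rcases hadjH_succ hvz with ⟨h1, h2⟩ | ⟨h1, h2⟩ <;>
          rcases hz with ⟨hz0, hz⟩ | ⟨hz0, hz⟩
        · exact absurd (hv0.trans hz0.symm) h1
        · exact absurd (h2 ▸ hz) (AsetH_disj n _ hv)
        · exact ⟨hz0, hz, h2⟩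
        · exact absurd (h1.symm.trans hv0) hz0
      obtain ⟨a1, a2, a3⟩ := main x hx hvx
      obtain ⟨b1, b2, b3⟩ := main y hy hvy
      exact ⟨a1.trans b1.symm, AsetH_deg n _ _ _ hv a2 b2 a3 b3⟩
    · have main : ∀ z, z ∈ AsetH (n + 1) → HAdjH v z →
          z 0 ≠ 0 ∧ v 0 ≠ z 0 ∧ Fin.tail v = Fin.tail z := by
        intro z hz hvz
        rcases hadjH_succ hvz with ⟨h1, h2⟩ | ⟨h1, h2⟩ <;>
          rcases hz with ⟨hz0, hz⟩ | ⟨hz0, hz⟩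
        · exact absurd hv (AsetH_disj n _ (h2 ▸ hz))
        · exact ⟨hz0, h1, h2⟩
        · exact absurd (h1.trans hz0) hv0
        · exact absurd h2 (BsetH_indep hv hz)
      obtain ⟨a1, a2, a3⟩ := main x hx hvx
      obtain ⟨b1, b2, b3⟩ := main y hy hvy
      exact ⟨key _ _ _ hv0 a1 b1 a2 b2, a3.symm.trans b3⟩

lemma consH_inj {n : ℕ} (a : ZMod 3) :
    Function.Injective (fun t : Fin n → ZMod 3 => (Fin.cons a t : Fin (n + 1) → ZMod 3)) :=
  fun _ _ h => Fin.cons_right_injective (α := fun _ => ZMod 3) a h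

lemma BsetH_card (n : ℕ) : (BsetH (n + 1)).ncard = 3 ^ n := by
  have h : BsetH (n + 1) = (fun t : Fin n → ZMod 3 =>
      (Fin.cons (2 - ∑ i, t i) t : Fin (n + 1) → ZMod 3)) '' Set.univ := by
    ext x
    constructor
    · intro hx
      have hx' : ∑ i, x i = 2 := hx
      rw [sumH] at hx'
      refine ⟨Fin.tail x, trivial, ?_⟩
      have : 2 - ∑ i, Fin.tail x i = x 0 := by rw [← hx']; ring
      simp only [this]
      exact Fin.cons_self_tail x
    · rintro ⟨t, -, rfl⟩
      simp [BsetH, Fin.sum_univ_succ]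
  rw [h, Set.ncard_image_of_injective, Set.ncard_univ]
  · simp [Nat.card_eq_fintype_card]
  · intro s t hst
    have := congrArg Fin.tail hst
    simpa using this

lemma AsetH_card : ∀ n : ℕ, (AsetH n).ncard = 3 ^ n + 1
  | 0 => by
    have h : AsetH 0 = {(fun _ => 0), (fun _ => 1)} := by
      have key : ∀ a : ZMod 3, a ≠ 2 ↔ a = 0 ∨ a = 1 := by decide
      ext x
      simp only [AsetH, Set.mem_setOf_eq, key, Set.mem_insert_iff, Set.mem_singleton_iff,
        funext_iff, Fin.forall_fin_one, zero_add]
      simp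
    rw [h, Set.ncard_pair]
    · norm_num
    · intro h
      exact absurd (congrFun h 0) (by decide)
  | n + 1 => by
    have h : AsetH (n + 1) = (fun t => (Fin.cons 0 t : Fin (n + 2) → ZMod 3)) '' AsetH n ∪
        ((fun t => (Fin.cons 1 t : Fin (n + 2) → ZMod 3)) '' BsetH (n + 1) ∪
        (fun t => (Fin.cons 2 t : Fin (n + 2) → ZMod 3)) '' BsetH (n + 1)) := by
      have key : ∀ a : ZMod 3, a ≠ 0 → a = 1 ∨ a = 2 := by decide
      ext x
      constructor
      · rintro (⟨h0, h⟩ | ⟨h0, h⟩)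
        · left
          refine ⟨_, h, ?_⟩
          simp only [← h0]
          exact Fin.cons_self_tail x
        · right
          rcases key _ h0 with h1 | h1
          · left
            refine ⟨_, h, ?_⟩
            simp only [← h1]
            exact Fin.cons_self_tail x
          · right
            refine ⟨_, h, ?_⟩
            simp only [← h1]
            exact Fin.cons_self_tail x
      · rintro (⟨t, h, rfl⟩ | ⟨t, h, rfl⟩ | ⟨t, h, rfl⟩)
        · exact Or.inl ⟨rfl, h⟩
        · exact Or.inr ⟨(by decide : (1 : ZMod 3) ≠ 0), h⟩
        · exact Or.inr ⟨(by decide : (2 : ZMod 3) ≠ 0), h⟩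
    have d : ∀ a b : ZMod 3, a ≠ b → ∀ S T : Set (Fin (n + 1) → ZMod 3),
        Disjoint ((fun t => (Fin.cons a t : Fin (n + 2) → ZMod 3)) '' S)
          ((fun t => (Fin.cons b t : Fin (n + 2) → ZMod 3)) '' T) := by
      intro a b hab S T
      rw [Set.disjoint_left]
      rintro _ ⟨s, -, rfl⟩ ⟨t, -, h⟩
      exact hab (congrFun h 0).symm
    rw [h, Set.ncard_union_eq (Set.disjoint_union_right.2
      ⟨d _ _ (by decide) _ _, d _ _ (by decide) _ _⟩) (Set.toFinite _) (Set.toFinite _),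
      Set.ncard_union_eq (d _ _ (by decide) _ _) (Set.toFinite _) (Set.toFinite _),
      Set.ncard_image_of_injective _ (consH_inj _), Set.ncard_image_of_injective _ (consH_inj _),
      Set.ncard_image_of_injective _ (consH_inj _), AsetH_card n, BsetH_card]
    ring

lemma adj_iffH {r : ℕ} (x y : Fin r → ZMod 3) :
    (SimpleGraph.fromRel (fun x y : Fin r → ZMod 3 =>
      ∃ i : Fin r, y = x + Pi.single i 1 ∨ y = x - Pi.single i 1)).Adj x y ↔ HAdjH x y := by
  have k1 : ∀ a b : ZMod 3, a ≠ b → b = a + 1 ∨ b = a - 1 := by decide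
  have k2 : ∀ a : ZMod 3, a ≠ a + 1 ∧ a ≠ a - 1 ∧ a + 1 ≠ a ∧ a - 1 ≠ a := by decide
  rw [SimpleGraph.fromRel_adj]
  constructor
  · rintro ⟨-, ⟨i, rfl | rfl⟩ | ⟨i, rfl | rfl⟩⟩ <;>
      refine ⟨i, ?_, fun j hj => ?_⟩ <;> simp_all
  · rintro ⟨i, hi, hj⟩
    refine ⟨fun h => hi (congrFun h i), Or.inl ⟨i, ?_⟩⟩
    refine (k1 _ _ hi).imp (fun h => ?_) (fun h => ?_) <;>
    · funext j
      by_cases hji : j = i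
      · subst hji
        simpa using h
      · simp [hji, hj j hji]


/-- In the Cayley graph of `(ℤ/3ℤ)^r` with respect to `{±e_1, …, ±e_r}`:
(i) every independent set has at most `3^{r−1}` elements; and
(ii) there are disjoint sets `A` (of size `3^{r−1} + 1`, inducing maximum degree at
most `1`) and `B` (an independent set of size `3^{r−1}`). -/
theorem stmt19 (r : ℕ) (hr : 1 ≤ r)
    (G : SimpleGraph (Fin r → ZMod 3))
    (hG : G = SimpleGraph.fromRel (fun x y =>
      ∃ i : Fin r, y = x + Pi.single i 1 ∨ y = x - Pi.single i 1)) :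
    (∀ S : Set (Fin r → ZMod 3),
      (∀ x ∈ S, ∀ y ∈ S, ¬ G.Adj x y) → S.ncard ≤ 3 ^ (r - 1)) ∧
    ∃ A B : Set (Fin r → ZMod 3), Disjoint A B ∧
      A.ncard = 3 ^ (r - 1) + 1 ∧ B.ncard = 3 ^ (r - 1) ∧
      (∀ v ∈ A, (A ∩ G.neighborSet v).ncard ≤ 1) ∧
      (∀ x ∈ B, ∀ y ∈ B, ¬ G.Adj x y) := by
  obtain ⟨n, rfl⟩ : ∃ n, r = n + 1 := ⟨r - 1, by omega⟩
  have hadj : ∀ x y, G.Adj x y ↔ HAdjH x y := by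
    subst hG
    exact adj_iffH
  simp only [hadj, Nat.add_sub_cancel]
  refine ⟨fun S hS => ?_, AsetH n, BsetH (n + 1), ?_, AsetH_card n, BsetH_card n, ?_, ?_⟩
  · have hinj : Set.InjOn (Fin.tail : (Fin (n + 1) → ZMod 3) → (Fin n → ZMod 3)) S := by
      intro x hx y hy h
      by_contra hne
      exact hS x hx y hy (hadjH_of_tail hne h)
    rw [← Set.ncard_image_of_injOn hinj]
    refine (Set.ncard_le_ncard (Set.subset_univ _) (Set.toFinite _)).trans ?_
    rw [Set.ncard_univ]
    simp [Nat.card_eq_fintype_card]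
  · rw [Set.disjoint_left]
    exact AsetH_disj n
  · intro v hv
    rw [Set.ncard_le_one (Set.toFinite _)]
    rintro x ⟨hx, hvx⟩ y ⟨hy, hvy⟩
    exact AsetH_deg n v x y hv hx hy ((hadj _ _).1 hvx) ((hadj _ _).1 hvy)
  · intro x hx y hy
    exact BsetH_indep hx hy
end
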